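/- The spaces of admissible and indecomposable admissible functions in four and five variables have the following dimensions over k: dim R⁴₀ = 3, dim R⁴ = 6, dim R⁵₀ = 16, and dim R⁵ = 26. -/

import Mathlib

open scoped Classical

noncomputable section

namespace Griess

open MvPolynomial

variable {k : Type} [Field k]

/-- The field `k(z₁,…,z_l)` of rational functions over `k` in `l` variables. -/
abbrev RF (k : Type) [Field k] (l : ℕ) : Type := FractionRing (MvPolynomial (Fin l) k)

/-- The variable `zᵢ` as an element of the rational function field. -/
def zv {k : Type} [Field k] {l : ℕ} (i : Fin l) : RF k l :=
  algebraMap (MvPolynomial (Fin l) k) (RF k l) (MvPolynomial.X i)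

/-- The space `Φ^l` of rational functions of the form
`p(z₁,…,z_l) · ∏_{i<j} (zᵢ - z_j)^{k_{ij}}`. -/
def Phi (k : Type) [Field k] (l : ℕ) : Set (RF k l) :=
  { x | ∃ (p : MvPolynomial (Fin l) k) (e : Fin l → Fin l → ℤ),
      x = algebraMap (MvPolynomial (Fin l) k) (RF k l) p *
        ∏ i : Fin l, ∏ j : Fin l, (if i < j then (zv i - zv j) ^ e i j else 1) }

/-- `D` is the family of partial derivative operators `∂_{z₁},…,∂_{z_l}`:
a family of `k`-linear derivations with `D i (z j) = δ_{ij}`. -/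
def IsPartialDeriv {l : ℕ} (D : Fin l → Derivation k (RF k l) (RF k l)) : Prop :=
  ∀ i j : Fin l, D i (zv j) = if j = i then 1 else 0

/-- The operator `Δ = Σᵢ ∂_{zᵢ}`. -/
def Delta {l : ℕ} (D : Fin l → Derivation k (RF k l) (RF k l)) (α : RF k l) : RF k l :=
  ∑ i, D i α

/-- The operator `Δ*(n₁,…,n_l) = Σᵢ (zᵢ² ∂_{zᵢ} + nᵢ zᵢ)`. -/
def DeltaStar {l : ℕ} (D : Fin l → Derivation k (RF k l) (RF k l)) (n : Fin l → ℤ)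
    (α : RF k l) : RF k l :=
  ∑ i, ((zv i) ^ 2 * D i α + (n i : RF k l) * zv i * α)

section Subst

variable {l : ℕ}

/-- The embedding of polynomials in `z₁,…,z_l` into rational functions of
`z₁,…,z_l` and one extra variable `t` (`= RatFunc.X`). -/
def toRatFuncHom (k : Type) [Field k] (l : ℕ) :
    Polynomial (MvPolynomial (Fin l) k) →+* RatFunc (RF k l) :=
  (algebraMap (Polynomial (RF k l)) (RatFunc (RF k l))).comp
    (Polynomial.mapRingHom (algebraMap (MvPolynomial (Fin l) k) (RF k l)))

lemma toRatFuncHom_injective : Function.Injective (toRatFuncHom k l) := by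
  have h1 : Function.Injective (algebraMap (Polynomial (RF k l)) (RatFunc (RF k l))) :=
    IsFractionRing.injective _ _
  have h2 : Function.Injective
      (Polynomial.mapRingHom (algebraMap (MvPolynomial (Fin l) k) (RF k l))) :=
    Polynomial.map_injective _ (IsFractionRing.injective _ _)
  exact fun a b hab => h2 (h1 hab)

/-- Polynomial level substitution `z_j ↦ t·z_j` for `j ∈ J`. -/
def scaleAux (k : Type) [Field k] (l : ℕ) (J : Finset (Fin l)) :
    MvPolynomial (Fin l) k →+* Polynomial (MvPolynomial (Fin l) k) :=
  (MvPolynomial.aeval (R := k) fun i =>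
    if i ∈ J then Polynomial.X * Polynomial.C (MvPolynomial.X i)
    else Polynomial.C (MvPolynomial.X i)).toRingHom

lemma scaleAux_injective (J : Finset (Fin l)) :
    Function.Injective (scaleAux k l J) := by
  have h : (Polynomial.evalRingHom (1 : MvPolynomial (Fin l) k)).comp (scaleAux k l J)
      = RingHom.id _ := by
    apply MvPolynomial.ringHom_ext
    · intro r; simp [scaleAux]
    · intro i; by_cases hi : i ∈ J <;> simp [scaleAux, hi]
  intro p q hpq
  have hp := DFunLike.congr_fun h p
  have hq := DFunLike.congr_fun h q
  simp only [RingHom.comp_apply, RingHom.id_apply] at hp hq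
  rw [← hp, ← hq, hpq]

/-- The substitution `z_j ↦ t·z_j` (for `j ∈ J`), as a map from rational functions
in `z₁,…,z_l` to rational functions in `z₁,…,z_l` and `t`.  Reading off the
coefficients of the Laurent expansion in `t` at `t = 0` of `scaleJ J α` yields the
decomposition of `α` into its homogeneous components with respect to the total degree
in the variables `{z_j : j ∈ J}`, i.e. the expansion of `α` in the domain where the
variables of `J` are much smaller than the remaining variables. -/
def scaleJ (J : Finset (Fin l)) : RF k l →+* RatFunc (RF k l) :=
  IsFractionRing.lift (g := (toRatFuncHom k l).comp (scaleAux k l J))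
    (fun a b hab => scaleAux_injective J (toRatFuncHom_injective hab))

/-- Polynomial level substitution `z_i ↦ z_j + t`. -/
def subPairAux (k : Type) [Field k] (l : ℕ) (i j : Fin l) :
    MvPolynomial (Fin l) k →+* Polynomial (MvPolynomial (Fin l) k) :=
  (MvPolynomial.aeval (R := k) fun s =>
    if s = i then Polynomial.X + Polynomial.C (MvPolynomial.X j)
    else Polynomial.C (MvPolynomial.X s)).toRingHom

lemma subPairAux_injective (i j : Fin l) :
    Function.Injective (subPairAux k l i j) := by
  have h : (Polynomial.evalRingHom (MvPolynomial.X i - MvPolynomial.X j)).comp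
      (subPairAux k l i j) = RingHom.id _ := by
    apply MvPolynomial.ringHom_ext
    · intro r; simp [subPairAux]
    · intro s; by_cases hs : s = i <;> simp [subPairAux, hs]
  intro p q hpq
  have hp := DFunLike.congr_fun h p
  have hq := DFunLike.congr_fun h q
  simp only [RingHom.comp_apply, RingHom.id_apply] at hp hq
  rw [← hp, ← hq, hpq]

/-- The substitution `z_i ↦ z_j + t`, as a map from rational functions in `z₁,…,z_l`
to rational functions in the variables `z₁,…,z_l` and `t`.  Reading off the Laurent
coefficients in `t` at `t = 0` yields the expansion of a rational function in powers
of `z_i - z_j`, with coefficients not involving `z_i`. -/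
def subPair (i j : Fin l) : RF k l →+* RatFunc (RF k l) :=
  IsFractionRing.lift (g := (toRatFuncHom k l).comp (subPairAux k l i j))
    (fun a b hab => subPairAux_injective i j (toRatFuncHom_injective hab))

end Subst

/-- The coefficient of `tᵐ` in the Laurent expansion at `t = 0` of a rational
function of `t`. -/
def lcoeff {L : Type} [Field L] (m : ℤ) (f : RatFunc L) : L :=
  (f : LaurentSeries L).coeff m

/-- The component `(α)_n` of `α` of degree `n` with respect to the partition
`{1,…,l} = Jᶜ ⊔ J` and the weights `d`:  the part of the expansion of `α` in the
domain where the variables of `J` are much smaller than those of `Jᶜ` whose total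
degree in the variables `{z_j : j ∈ J}` equals `n - Σ_{j∈J} d_j`. -/
def component {l : ℕ} (J : Finset (Fin l)) (d : Fin l → ℤ) (n : ℤ) (α : RF k l) :
    RF k l :=
  lcoeff (n - ∑ j ∈ J, d j) (scaleJ J α)

/-- `α` is homogeneous of total degree `d` in the variables `{z_i : i ∈ S}`:
substituting `z_i ↦ t·z_i` for `i ∈ S` multiplies `α` by `t^d`. -/
def IsHomogeneousOn {l : ℕ} (S : Finset (Fin l)) (d : ℤ) (α : RF k l) : Prop :=
  scaleJ S α = RatFunc.X ^ d * RatFunc.C α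

/-- `ρ^{(m)}_{ij} α`: the coefficient of `(z_i - z_j)^m` in the expansion of `α`
in powers of `z_i - z_j` (the coefficients do not involve `z_i`). -/
def rho {l : ℕ} (i j : Fin l) (m : ℤ) (α : RF k l) : RF k l :=
  lcoeff m (subPair i j α)

/-- `α` is a rational function of the variables `{z_i : i ∈ S}` only. -/
def dependsOnlyOn {l : ℕ} (S : Finset (Fin l)) (α : RF k l) : Prop :=
  α ∈ Subfield.closure (Set.range (algebraMap k (RF k l)) ∪ {x | ∃ i ∈ S, x = zv i})

/-- `α` is an admissible function of the variables `{z_i : i ∈ S}` (the space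
`R^{|S|}`):  `α ∈ Φ` is a rational function of the variables of `S` only, it is
`(4,…,4)`-regular and homogeneous of degree `-2|S|` in these variables, and all its
components of negative degree, as well as those of degree `1`, vanish (with respect
to every partition of `S` and all weights equal to `2`). -/
def Admissible {l : ℕ} (D : Fin l → Derivation k (RF k l) (RF k l)) (S : Finset (Fin l))
    (α : RF k l) : Prop :=
  α ∈ Phi k l ∧ dependsOnlyOn S α ∧
    (∑ i ∈ S, ((zv i) ^ 2 * D i α + 4 * zv i * α)) = 0 ∧
    IsHomogeneousOn S (-(2 * (S.card : ℤ))) α ∧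
    ∀ J ⊆ S, ∀ n : ℤ, (n < 0 ∨ n = 1) → component J (fun _ => 2) n α = 0

/-- `α` is an indecomposable admissible function of the variables `{z_i : i ∈ S}`
(the space `R₀^{|S|}`): admissible, and all the components `(α)₀` with respect to
partitions of `S` into two nonempty parts vanish. -/
def AdmissibleInd {l : ℕ} (D : Fin l → Derivation k (RF k l) (RF k l))
    (S : Finset (Fin l)) (α : RF k l) : Prop :=
  Admissible D S α ∧
    ∀ J ⊆ S, J ≠ ∅ → J ≠ S → component J (fun _ => 2) 0 α = 0

section Shift

variable {l : ℕ}

/-- Polynomial level substitution `z_s ↦ z_s - z_t` for `s ∈ S`. -/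
def shiftAuxP (k : Type) [Field k] (l : ℕ) (S : Finset (Fin l)) (t : Fin l) :
    MvPolynomial (Fin l) k →+* MvPolynomial (Fin l) k :=
  (MvPolynomial.aeval (R := k) fun s =>
    if s ∈ S then MvPolynomial.X s - MvPolynomial.X t else MvPolynomial.X s).toRingHom

lemma shiftAuxP_injective (S : Finset (Fin l)) (t : Fin l) (ht : t ∉ S) :
    Function.Injective (shiftAuxP k l S t) := by
  have h : ((MvPolynomial.aeval (R := k) fun s =>
      if s ∈ S then MvPolynomial.X s + MvPolynomial.X t
      else MvPolynomial.X s).toRingHom).comp (shiftAuxP k l S t) = RingHom.id _ := by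
    apply MvPolynomial.ringHom_ext
    · intro r; simp [shiftAuxP]
    · intro s
      by_cases hs : s ∈ S
      · have hst : s ≠ t := fun hst => ht (hst ▸ hs)
        simp [shiftAuxP, hs, ht]
      · simp [shiftAuxP, hs]
  intro p q hpq
  have hp := DFunLike.congr_fun h p
  have hq := DFunLike.congr_fun h q
  simp only [RingHom.comp_apply, RingHom.id_apply] at hp hq
  rw [← hp, ← hq, hpq]

/-- The shift operator substituting `z_s - z_t` for `z_s`, for all `s ∈ S`. -/
def shiftT (S : Finset (Fin l)) (t : Fin l) (ht : t ∉ S) : RF k l →+* RF k l :=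
  IsFractionRing.lift
    (g := (algebraMap (MvPolynomial (Fin l) k) (RF k l)).comp (shiftAuxP k l S t))
    (fun a b hab =>
      shiftAuxP_injective S t ht (IsFractionRing.injective _ _ hab))

/-- The operator `ℰ = Σ_{s ∈ S} (-z_s⁻¹ ∂_{z_s} + 2 z_s⁻²)`. -/
def curlyE {l : ℕ} (D : Fin l → Derivation k (RF k l) (RF k l)) (S : Finset (Fin l))
    (β : RF k l) : RF k l :=
  ∑ s ∈ S, (-((zv s)⁻¹ * D s β) + 2 * (zv s) ^ (-2 : ℤ) * β)

end Shift

end Griess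

namespace Griess

/-! For `3 ≤ l ≤ 5` an admissible function is indecomposable exactly when its poles have order at
most two. Such a function is a polynomial times `∏ (zᵢ - z_j)⁻²`, and regularity together with
homogeneity makes the polynomial an `sl₂`-invariant in the tensor product of `l` copies of the
irreducible representation of dimension `2l - 5`; these invariants are counted by the
Clebsch–Gordan rule. The Weyl element of `sl₂` relates the orders of pole along `J` and along `Jᶜ`,
so that conditions at all `J` follow from those at pairs.

A nonzero component of degree zero can therefore occur only at a partition with a block of two
elements. There regularity forces it to be a multiple of the product of the functions `(x - y)⁻⁴`
and `(x - y)⁻²(y - z)⁻²(x - z)⁻²` spanning `R²` and `R³`. These products, one for each such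
partition, span a complement of the indecomposable functions. -/

open MvPolynomial

section LaurentExpansion

variable {k : Type} [Field k] {l : ℕ}

attribute [local instance] RatFunc.liftAlgebra

/-- The Laurent expansion in `t` of the rational function obtained from `α` by the substitution
`z_j ↦ t·z_j` for `j ∈ J`. -/
def laurentExpansion (J : Finset (Fin l)) : RF k l →+* LaurentSeries (RF k l) :=
  (algebraMap (RatFunc (RF k l)) (LaurentSeries (RF k l))).comp (scaleJ J)

lemma component_eq_coeff (J : Finset (Fin l)) (d : Fin l → ℤ) (n : ℤ) (α : RF k l) :
    component J d n α = (laurentExpansion J α).coeff (n - ∑ j ∈ J, d j) :=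
  rfl

lemma algebraMap_ratFunc_C {L : Type} [Field L] (a : L) :
    algebraMap (RatFunc L) (LaurentSeries L) (RatFunc.C a) = HahnSeries.single 0 a := by
  rw [← RatFunc.algebraMap_C, ← IsScalarTower.algebraMap_apply]
  simp [HahnSeries.C_apply]

lemma isHomogeneousOn_iff {S : Finset (Fin l)} {d : ℤ} {α : RF k l} :
    IsHomogeneousOn S d α ↔ laurentExpansion S α = HahnSeries.single d α := by
  have hsingle : algebraMap (RatFunc (RF k l)) (LaurentSeries (RF k l))
      (RatFunc.X ^ d * RatFunc.C α) = HahnSeries.single d α := by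
    rw [map_mul, map_zpow₀, RatFunc.coe_X, ← RatFunc.single_zpow, algebraMap_ratFunc_C,
      HahnSeries.single_mul_single, add_zero, one_mul]
  rw [IsHomogeneousOn, ← hsingle]
  exact (algebraMap (RatFunc (RF k l)) (LaurentSeries (RF k l))).injective.eq_iff.symm

lemma algebraMap_C (c : k) :
    algebraMap (MvPolynomial (Fin l) k) (RF k l) (C c) = algebraMap k (RF k l) c :=
  (IsScalarTower.algebraMap_apply k (MvPolynomial (Fin l) k) (RF k l) c).symm

lemma scaleJ_algebraMap (J : Finset (Fin l)) (p : MvPolynomial (Fin l) k) :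
    scaleJ J (algebraMap _ (RF k l) p) = toRatFuncHom k l (scaleAux k l J p) :=
  IsFractionRing.lift_algebraMap _ _

lemma laurentExpansion_zv (J : Finset (Fin l)) (i : Fin l) :
    laurentExpansion J (zv i : RF k l) = HahnSeries.single (if i ∈ J then 1 else 0) (zv i) := by
  have hscale : scaleJ J (zv i : RF k l) =
      (if i ∈ J then RatFunc.X else 1) * RatFunc.C (zv i : RF k l) := by
    rw [zv, scaleJ_algebraMap]
    by_cases hi : i ∈ J <;> simp [scaleAux, toRatFuncHom, hi, -Polynomial.X_mul_C]
  rw [laurentExpansion, RingHom.comp_apply, hscale, map_mul, algebraMap_ratFunc_C]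
  split_ifs <;> simp [RatFunc.coe_X]

lemma laurentExpansion_algebraMap_field (J : Finset (Fin l)) (c : k) :
    laurentExpansion J (algebraMap k (RF k l) c) =
      HahnSeries.single 0 (algebraMap k (RF k l) c) := by
  rw [laurentExpansion, RingHom.comp_apply, ← algebraMap_C, scaleJ_algebraMap]
  simp [scaleAux, toRatFuncHom, algebraMap_ratFunc_C]

lemma laurentExpansion_smul (J : Finset (Fin l)) (c : k) (α : RF k l) :
    laurentExpansion J (c • α) = algebraMap k (RF k l) c • laurentExpansion J α := by
  rw [Algebra.smul_def, map_mul, laurentExpansion_algebraMap_field, ← HahnSeries.C_apply,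
    HahnSeries.C_mul_eq_smul]

lemma prod_single {L ι : Type} [Field L] (s : Finset ι) (d : ι → ℤ) (a : ι → L) :
    ∏ i ∈ s, HahnSeries.single (d i) (a i) =
      (HahnSeries.single (∑ i ∈ s, d i) (∏ i ∈ s, a i) : LaurentSeries L) := by
  induction s using Finset.cons_induction with
  | empty => simp
  | cons i s hi ih =>
    rw [Finset.prod_cons, Finset.sum_cons, Finset.prod_cons, ih, HahnSeries.single_mul_single]

lemma laurentExpansion_algebraMap_monomial (J : Finset (Fin l)) (m : Fin l →₀ ℕ) (c : k) :
    laurentExpansion J (algebraMap _ (RF k l) (monomial m c)) =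
      HahnSeries.single (∑ i ∈ J, (m i : ℤ)) (algebraMap _ _ (monomial m c)) := by
  have hm : algebraMap _ (RF k l) (monomial m c) = algebraMap k _ c * ∏ i, zv i ^ m i := by
    rw [monomial_eq, Finsupp.prod_fintype _ _ fun _ => pow_zero _, map_mul, map_prod, algebraMap_C]
    simp only [map_pow, zv]
  rw [hm, map_mul, map_prod, laurentExpansion_algebraMap_field]
  simp only [map_pow, laurentExpansion_zv, HahnSeries.single_pow, prod_single,
    HahnSeries.single_mul_single, zero_add, nsmul_eq_mul, mul_ite, mul_one, mul_zero,
    Finset.sum_ite_mem, Finset.univ_inter]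

lemma laurentExpansion_algebraMap (J : Finset (Fin l)) (p : MvPolynomial (Fin l) k) :
    laurentExpansion J (algebraMap _ (RF k l) p) = ∑ m ∈ p.support,
      HahnSeries.single (∑ i ∈ J, (m i : ℤ)) (algebraMap _ _ (monomial m (coeff m p))) := by
  conv_lhs => rw [p.as_sum]
  simp only [map_sum, laurentExpansion_algebraMap_monomial]

lemma coeff_laurentExpansion_algebraMap_eq_zero_iff {J : Finset (Fin l)}
    {p : MvPolynomial (Fin l) k} {n : ℤ} :
    (laurentExpansion J (algebraMap _ (RF k l) p)).coeff n = 0 ↔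
      ∀ m ∈ p.support, n ≠ ∑ i ∈ J, (m i : ℤ) := by
  have hcoeff : (laurentExpansion J (algebraMap _ (RF k l) p)).coeff n =
      algebraMap _ _ (∑ m ∈ p.support with n = ∑ i ∈ J, (m i : ℤ), monomial m (coeff m p)) := by
    rw [laurentExpansion_algebraMap, HahnSeries.coeff_sum, map_sum, Finset.sum_filter]
    refine Finset.sum_congr rfl fun m _ => ?_
    split_ifs with hn
    · rw [hn, HahnSeries.coeff_single_same]
    · exact HahnSeries.coeff_single_of_ne hn
  rw [hcoeff, map_eq_zero_iff _ (IsFractionRing.injective _ _)]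
  refine ⟨fun h m hm hmn => mem_support_iff.1 hm ?_, fun h => ?_⟩
  · simpa [coeff_sum, Finset.sum_ite_eq', hmn, hm] using congrArg (coeff m) h
  · rw [Finset.filter_false_of_mem h, Finset.sum_empty]

end LaurentExpansion

section OrdAlong

variable {k : Type} [Field k] {l : ℕ}

/-- The order of vanishing of a rational function when the variables of `J` tend to `0`
simultaneously. -/
def ordAlong (J : Finset (Fin l)) : AddValuation (RF k l) (WithTop ℤ) :=
  (HahnSeries.addVal ℤ (RF k l)).comap (laurentExpansion J)

lemma le_ordAlong_iff {J : Finset (Fin l)} {n : ℤ} {α : RF k l} :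
    (n : WithTop ℤ) ≤ ordAlong J α ↔ ∀ m < n, (laurentExpansion J α).coeff m = 0 := by
  change _ ≤ HahnSeries.addVal ℤ (RF k l) (laurentExpansion J α) ↔ _
  rw [HahnSeries.addVal_apply, HahnSeries.le_orderTop_iff_forall]
  simp

lemma ordAlong_of_single {J : Finset (Fin l)} {n : ℤ} {α a : RF k l} (ha : a ≠ 0)
    (h : laurentExpansion J α = HahnSeries.single n a) : ordAlong J α = n := by
  change HahnSeries.addVal ℤ (RF k l) (laurentExpansion J α) = n
  rw [h, HahnSeries.addVal_apply, HahnSeries.orderTop_single ha]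

lemma le_ordAlong_algebraMap_iff {J : Finset (Fin l)} {n : ℤ} {p : MvPolynomial (Fin l) k} :
    (n : WithTop ℤ) ≤ ordAlong J (algebraMap _ (RF k l) p) ↔
      ∀ m ∈ p.support, n ≤ ∑ i ∈ J, (m i : ℤ) := by
  simp only [le_ordAlong_iff, coeff_laurentExpansion_algebraMap_eq_zero_iff]
  exact ⟨fun h m hm => not_lt.1 fun hlt => h _ hlt m hm rfl,
    fun h j hj m hm => (hj.trans_le (h m hm)).ne⟩

end OrdAlong

section DiffProd

variable {k : Type} [Field k] {l : ℕ}

/-- The pairs of indices over which the products in `Phi` range. -/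
def orderedPairs (l : ℕ) : Finset (Fin l × Fin l) :=
  Finset.univ.filter fun p => p.1 < p.2

lemma mem_orderedPairs {p : Fin l × Fin l} : p ∈ orderedPairs l ↔ p.1 < p.2 := by
  simp [orderedPairs]

/-- The product of the differences `zᵢ - z_j`, `i < j`, with prescribed integer exponents; the
values of `e` off `orderedPairs l` are irrelevant. -/
def diffProd (k : Type) [Field k] (e : Fin l × Fin l → ℤ) : RF k l :=
  ∏ p ∈ orderedPairs l, (zv p.1 - zv p.2) ^ e p

/-- The sum of the exponents of the differences of two variables of `J`. -/
def innerSum (e : Fin l × Fin l → ℤ) (J : Finset (Fin l)) : ℤ :=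
  ∑ p ∈ orderedPairs l with p.1 ∈ J ∧ p.2 ∈ J, e p

/-- The sum of the exponents of the differences involving the variable `zᵢ`. -/
def incidentSum (e : Fin l × Fin l → ℤ) (i : Fin l) : ℤ :=
  ∑ p ∈ orderedPairs l with p.1 = i ∨ p.2 = i, e p

/-- No difference of a variable in `J` and a variable outside `J` occurs in `diffProd k e`. -/
def IsSplitBy (e : Fin l × Fin l → ℤ) (J : Finset (Fin l)) : Prop :=
  ∀ p ∈ orderedPairs l, ¬(p.1 ∈ J ↔ p.2 ∈ J) → e p = 0

lemma zv_sub_zv_ne_zero {i j : Fin l} (h : i ≠ j) : (zv i - zv j : RF k l) ≠ 0 :=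
  sub_ne_zero.2 fun hij => h (X_injective (IsFractionRing.injective _ (RF k l) hij))

lemma diffProd_ne_zero (e : Fin l × Fin l → ℤ) : diffProd k e ≠ 0 :=
  Finset.prod_ne_zero_iff.2 fun _ hp =>
    zpow_ne_zero _ (zv_sub_zv_ne_zero (mem_orderedPairs.1 hp).ne)

lemma diffProd_add (e e' : Fin l × Fin l → ℤ) :
    diffProd k (e + e') = diffProd k e * diffProd k e' := by
  rw [diffProd, diffProd, diffProd, ← Finset.prod_mul_distrib]
  exact Finset.prod_congr rfl fun p hp =>
    zpow_add₀ (zv_sub_zv_ne_zero (mem_orderedPairs.1 hp).ne) _ _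

lemma diffProd_single {p : Fin l × Fin l} (hp : p ∈ orderedPairs l) :
    diffProd k (Pi.single p 1) = zv p.1 - zv p.2 := by
  rw [diffProd, Finset.prod_eq_single_of_mem p hp fun q _ hq => by simp [hq]]
  simp

lemma mem_Phi_iff {α : RF k l} :
    α ∈ Phi k l ↔ ∃ p e, α = algebraMap (MvPolynomial (Fin l) k) (RF k l) p * diffProd k e := by
  have hprod (e : Fin l → Fin l → ℤ) : ∏ i : Fin l, ∏ j : Fin l,
      (if i < j then (zv i - zv j : RF k l) ^ e i j else 1) = diffProd k (Function.uncurry e) := by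
    rw [diffProd, orderedPairs, Finset.prod_filter, Fintype.prod_prod_type]
    rfl
  constructor
  · rintro ⟨p, e, rfl⟩
    exact ⟨p, Function.uncurry e, by rw [hprod]⟩
  · rintro ⟨p, e, rfl⟩
    exact ⟨p, Function.curry e, by rw [hprod, Function.uncurry_curry]⟩

lemma exists_algebraMap_eq_diffProd {e : Fin l × Fin l → ℤ} (he : ∀ p ∈ orderedPairs l, 0 ≤ e p) :
    ∃ q : MvPolynomial (Fin l) k, algebraMap _ (RF k l) q = diffProd k e := by
  refine ⟨∏ p ∈ orderedPairs l, (X p.1 - X p.2) ^ (e p).toNat, ?_⟩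
  rw [map_prod]
  refine Finset.prod_congr rfl fun p hp => ?_
  rw [map_pow, map_sub, ← zpow_natCast, Int.toNat_of_nonneg (he p hp)]
  rfl

lemma sum_incidentSum (e : Fin l × Fin l → ℤ) (J : Finset (Fin l)) :
    ∑ i ∈ J, incidentSum e i =
      ∑ p ∈ orderedPairs l, ((if p.1 ∈ J then e p else 0) + if p.2 ∈ J then e p else 0) := by
  simp only [incidentSum, Finset.sum_filter]
  rw [Finset.sum_comm]
  refine Finset.sum_congr rfl fun p hp => ?_
  have hne : p.1 ≠ p.2 := (mem_orderedPairs.1 hp).ne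
  rw [← Finset.sum_ite_eq J p.1 fun _ => e p, ← Finset.sum_ite_eq J p.2 fun _ => e p,
    ← Finset.sum_add_distrib]
  refine Finset.sum_congr rfl fun i _ => ?_
  grind

lemma sum_incidentSum_sub_sum_compl (e : Fin l × Fin l → ℤ) (J : Finset (Fin l)) :
    ∑ i ∈ J, incidentSum e i - ∑ i ∈ Jᶜ, incidentSum e i =
      2 * (innerSum e J - innerSum e Jᶜ) := by
  simp only [sum_incidentSum, innerSum, Finset.sum_filter]
  rw [← Finset.sum_sub_distrib, ← Finset.sum_sub_distrib, Finset.mul_sum]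
  refine Finset.sum_congr rfl fun p _ => ?_
  by_cases h₁ : p.1 ∈ J <;> by_cases h₂ : p.2 ∈ J <;> simp [h₁, h₂] <;> ring

lemma sum_univ_incidentSum (e : Fin l × Fin l → ℤ) :
    ∑ i, incidentSum e i = 2 * innerSum e Finset.univ := by
  simp [sum_incidentSum, innerSum, Finset.mul_sum, two_mul]

lemma innerSum_pair (e : Fin l × Fin l → ℤ) {p : Fin l × Fin l} (hp : p ∈ orderedPairs l) :
    innerSum e {p.1, p.2} = e p := by
  have hfilter : ((orderedPairs l).filter fun q => q.1 ∈ ({p.1, p.2} : Finset (Fin l)) ∧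
      q.2 ∈ ({p.1, p.2} : Finset (Fin l))) = {p} := by
    ext q
    have hp' := mem_orderedPairs.1 hp
    simp only [Finset.mem_filter, mem_orderedPairs, Finset.mem_insert, Finset.mem_singleton,
      Prod.ext_iff]
    grind
  rw [innerSum, hfilter, Finset.sum_singleton]

lemma laurentExpansion_sub_of_iff {J : Finset (Fin l)} {i j : Fin l} (h : i ∈ J ↔ j ∈ J) :
    laurentExpansion J (zv i - zv j : RF k l) =
      HahnSeries.single (if i ∈ J ∧ j ∈ J then 1 else 0) (zv i - zv j) := by
  rw [map_sub, laurentExpansion_zv, laurentExpansion_zv, HahnSeries.single_sub]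
  simp only [h, and_self]

lemma single_zpow {L : Type} [Field L] (d n : ℤ) (a : L) :
    (HahnSeries.single d a ^ n : LaurentSeries L) = HahnSeries.single (n * d) (a ^ n) := by
  obtain ⟨n, rfl | rfl⟩ := n.eq_nat_or_neg
  · rw [zpow_natCast, zpow_natCast, HahnSeries.single_pow, nsmul_eq_mul]
  · rw [zpow_neg, zpow_neg, zpow_natCast, zpow_natCast, HahnSeries.single_pow,
      HahnSeries.inv_single, nsmul_eq_mul, neg_mul]

lemma laurentExpansion_diffProd {J : Finset (Fin l)} {e : Fin l × Fin l → ℤ}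
    (h : IsSplitBy e J) :
    laurentExpansion J (diffProd k e) = HahnSeries.single (innerSum e J) (diffProd k e) := by
  rw [innerSum, Finset.sum_filter, diffProd, ← prod_single, map_prod]
  refine Finset.prod_congr rfl fun p hp => ?_
  by_cases hJ : p.1 ∈ J ↔ p.2 ∈ J
  · rw [map_zpow₀, laurentExpansion_sub_of_iff hJ, single_zpow]
    split_ifs <;> simp
  · simp [h p hp hJ]

lemma ordAlong_sub (J : Finset (Fin l)) {i j : Fin l} (hij : i ≠ j) :
    ordAlong J (zv i - zv j : RF k l) = ((if i ∈ J ∧ j ∈ J then 1 else 0 : ℤ) : WithTop ℤ) := by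
  have hz (i : Fin l) : ordAlong J (zv i : RF k l) = ((if i ∈ J then 1 else 0 : ℤ) : WithTop ℤ) :=
    ordAlong_of_single (by simp [zv]) (laurentExpansion_zv J i)
  by_cases h : i ∈ J ↔ j ∈ J
  · exact ordAlong_of_single (zv_sub_zv_ne_zero hij) (laurentExpansion_sub_of_iff h)
  · by_cases hi : i ∈ J
    · have hj : j ∉ J := fun hj => h (iff_of_true hi hj)
      rw [AddValuation.map_sub_eq_of_lt_right] <;> simp [hz, hi, hj]
    · have hj : j ∈ J := not_not.1 fun hj => h (iff_of_false hi hj)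
      rw [AddValuation.map_sub_eq_of_lt_left] <;> simp [hz, hi, hj]

lemma addValuation_zpow {K : Type} [Field K] (v : AddValuation K (WithTop ℤ)) {x : K} {d : ℤ}
    (hx : v x = d) (n : ℤ) : v (x ^ n) = (n * d : ℤ) := by
  obtain ⟨n, rfl | rfl⟩ := n.eq_nat_or_neg
  · rw [zpow_natCast, AddValuation.map_pow, hx]
    norm_cast
  · rw [zpow_neg, zpow_natCast, AddValuation.map_inv, AddValuation.map_pow, hx]
    norm_cast
    simp

lemma addValuation_prod {K ι : Type} [Field K] (v : AddValuation K (WithTop ℤ)) {s : Finset ι}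
    {f : ι → K} {d : ι → ℤ} (h : ∀ i ∈ s, v (f i) = d i) :
    v (∏ i ∈ s, f i) = (∑ i ∈ s, d i : ℤ) := by
  induction s using Finset.cons_induction with
  | empty => simp
  | cons i s hi ih =>
    rw [Finset.prod_cons, Finset.sum_cons, AddValuation.map_mul, h i (Finset.mem_cons_self i s),
      ih fun j hj => h j (Finset.mem_cons_of_mem hj), WithTop.coe_add]

lemma ordAlong_diffProd (J : Finset (Fin l)) (e : Fin l × Fin l → ℤ) :
    ordAlong J (diffProd k e) = ((innerSum e J : ℤ) : WithTop ℤ) := by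
  have hfactor : ∀ p ∈ orderedPairs l, ordAlong J ((zv p.1 - zv p.2 : RF k l) ^ e p) =
      ((e p * if p.1 ∈ J ∧ p.2 ∈ J then 1 else 0 : ℤ) : WithTop ℤ) := fun p hp =>
    addValuation_zpow _ (ordAlong_sub J (mem_orderedPairs.1 hp).ne) _
  rw [diffProd, addValuation_prod _ hfactor, innerSum, Finset.sum_filter]
  simp only [mul_ite, mul_one, mul_zero]

end DiffProd

section PolynomialInvariants

variable {k σ : Type*} [Field k]

lemma rename_derivation {τ : Type*} {g : σ → τ}
    {D : Derivation k (MvPolynomial σ k) (MvPolynomial σ k)}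
    {D' : Derivation k (MvPolynomial τ k) (MvPolynomial τ k)}
    (h : ∀ s, rename g (D (X s)) = D' (X (g s))) (p : MvPolynomial σ k) :
    rename g (D p) = D' (rename g p) := by
  induction p using MvPolynomial.induction_on with
  | C a => simp only [derivation_C, map_zero, rename_C]
  | add p q hp hq => simp only [map_add, hp, hq]
  | mul_X p s hp =>
    simp only [Derivation.leibniz, smul_eq_mul, map_add, map_mul, rename_X, h, hp]

lemma coeff_X_mul_pderiv (i : σ) (m : σ →₀ ℕ) (p : MvPolynomial σ k) :
    coeff m (X i * pderiv i p) = m i * coeff m p := by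
  induction p using MvPolynomial.induction_on' with
  | add p q hp hq => simp only [map_add, mul_add, coeff_add, hp, hq]
  | monomial n c =>
    rw [X_mul_pderiv_monomial, coeff_smul, coeff_monomial, nsmul_eq_mul]
    split_ifs with h <;> simp [h]

variable [Fintype σ]

/-- The operator `∑ᵢ ∂ᵢ` on polynomials, the lowering operator of `sl₂`. -/
def lowering (k σ : Type*) [Field k] [Fintype σ] :
    Derivation k (MvPolynomial σ k) (MvPolynomial σ k) :=
  ∑ i, pderiv i

/-- The operator `∑ᵢ xᵢ²∂ᵢ` on polynomials, the raising operator of `sl₂` up to the weights. -/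
def raising (k σ : Type*) [Field k] [Fintype σ] :
    Derivation k (MvPolynomial σ k) (MvPolynomial σ k) :=
  ∑ i, (X i ^ 2 : MvPolynomial σ k) • pderiv i

/-- The linear form `∑ᵢ bᵢxᵢ`. -/
def linForm (k : Type*) [Field k] (b : σ → ℤ) : MvPolynomial σ k :=
  ∑ i, b i • X i

lemma derivation_sum_apply (c : σ → MvPolynomial σ k) (p : MvPolynomial σ k) :
    (∑ i, c i • pderiv i : Derivation k (MvPolynomial σ k) (MvPolynomial σ k)) p =
      ∑ i, c i * pderiv i p := by
  simp only [← Derivation.coeFnAddMonoidHom_apply, map_sum, Finset.sum_apply]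
  simp

lemma lowering_apply (p : MvPolynomial σ k) : lowering k σ p = ∑ i, pderiv i p := by
  simpa [lowering] using derivation_sum_apply (fun _ => 1) p

lemma raising_apply (p : MvPolynomial σ k) : raising k σ p = ∑ i, X i ^ 2 * pderiv i p :=
  derivation_sum_apply _ p

lemma lowering_X (i : σ) : lowering k σ (X i) = 1 := by
  simp [lowering_apply, pderiv_X, Pi.single_apply]

lemma raising_X (i : σ) : raising k σ (X i) = X i ^ 2 := by
  simp [raising_apply, pderiv_X, Pi.single_apply]

lemma linForm_add (b c : σ → ℤ) : linForm k (b + c) = linForm k b + linForm k c := by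
  simp [linForm, add_smul, Finset.sum_add_distrib]

lemma linForm_single (i : σ) (n : ℤ) :
    linForm k (Pi.single i n) = n • (X i : MvPolynomial σ k) := by
  rw [linForm, Finset.sum_eq_single_of_mem i (Finset.mem_univ i) fun j _ hj => by simp [hj]]
  simp

lemma lowering_linForm (b : σ → ℤ) : lowering k σ (linForm k b) = C ((∑ i, b i : ℤ) : k) := by
  simp only [linForm, map_sum, map_zsmul, lowering_X, Int.cast_sum]
  simp

lemma pderiv_linForm (i : σ) (b : σ → ℤ) : pderiv i (linForm k b) = C (b i : k) := by
  simp [linForm, pderiv_X, Pi.single_apply]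

/-- The polynomials killed by `∑ᵢ ∂ᵢ` and by `∑ᵢ (xᵢ²∂ᵢ - bᵢxᵢ)`. They are the invariants of
`sl₂` acting on the tensor product of the spaces of polynomials in `xᵢ` of degree at most `bᵢ`. -/
def sl2Invariants (k : Type*) [Field k] (b : σ → ℤ) : Submodule k (MvPolynomial σ k) where
  carrier := {Q | lowering k σ Q = 0 ∧ raising k σ Q = linForm k b * Q}
  zero_mem' := by simp
  add_mem' hP hQ := by simp_all [mul_add]
  smul_mem' c Q hQ := by simp_all

variable {b w : σ → ℤ} {Q : MvPolynomial σ k} {i j : σ}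

lemma mem_sl2Invariants :
    Q ∈ sl2Invariants k b ↔ lowering k σ Q = 0 ∧ raising k σ Q = linForm k b * Q :=
  Iff.rfl

section Support

/-- The Euler operator `∑ᵢ xᵢ∂ᵢ`. -/
def euler (k σ : Type*) [Field k] [Fintype σ] :
    Derivation k (MvPolynomial σ k) (MvPolynomial σ k) :=
  ∑ i, (X i : MvPolynomial σ k) • pderiv i

lemma euler_apply (p : MvPolynomial σ k) : euler k σ p = ∑ i, X i * pderiv i p :=
  derivation_sum_apply _ p

lemma coeff_euler (m : σ →₀ ℕ) (p : MvPolynomial σ k) :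
    coeff m (euler k σ p) = (∑ i, m i : ℕ) * coeff m p := by
  simp [euler_apply, coeff_sum, coeff_X_mul_pderiv, Finset.sum_mul]

lemma lowering_commutator_raising :
    ⁅lowering k σ, raising k σ⁆ = (2 : k) • euler k σ := by
  refine derivation_ext fun i => ?_
  have heuler : euler k σ (X i) = X i := by simp [euler_apply, pderiv_X, Pi.single_apply]
  simp only [Derivation.commutator_apply, Derivation.smul_apply, lowering_X, raising_X,
    Derivation.leibniz_pow, heuler, Derivation.map_one_eq_zero, smul_eq_C_mul,
    map_ofNat]
  simp

lemma two_mul_degree_eq [CharZero k] (hQ : Q ∈ sl2Invariants k b) {m : σ →₀ ℕ}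
    (hm : m ∈ Q.support) : 2 * ∑ i, (m i : ℤ) = ∑ i, b i := by
  have heuler : (2 : k) • euler k σ Q = C ((∑ i, b i : ℤ) : k) * Q := by
    rw [← Derivation.smul_apply, ← lowering_commutator_raising, Derivation.commutator_apply,
      hQ.1, hQ.2, map_zero, sub_zero, Derivation.leibniz, hQ.1, lowering_linForm, smul_zero,
      zero_add, smul_eq_mul, mul_comm]
  have hcoeff := congrArg (coeff m) heuler
  rw [coeff_smul, coeff_euler, coeff_C_mul, smul_eq_mul, ← mul_assoc] at hcoeff
  exact_mod_cast mul_right_cancel₀ (mem_support_iff.1 hm) hcoeff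

lemma exists_mem_support_apply_eq [CharZero k] (hQ : Q ∈ sl2Invariants k b) (hQ0 : Q ≠ 0) (s : σ) :
    ∃ m ∈ Q.support, (m s : ℤ) = b s ∧ ∀ n ∈ Q.support, n s ≤ m s := by
  obtain ⟨m, hm, hmax⟩ := Q.support.exists_max_image (fun m => m s) (support_nonempty.2 hQ0)
  refine ⟨m, hm, ?_, hmax⟩
  have hsum : ∑ i, X i * (X i * pderiv i Q - C (b i : k) * Q) = 0 := by
    rw [← sub_eq_zero.2 hQ.2, raising_apply, linForm, Finset.sum_mul, ← Finset.sum_sub_distrib]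
    refine Finset.sum_congr rfl fun i _ => ?_
    rw [zsmul_eq_mul, map_intCast]
    ring
  have hcoeff (i : σ) (n : σ →₀ ℕ) :
      coeff n (X i * pderiv i Q - C (b i : k) * Q) = (n i - b i) * coeff n Q := by
    rw [coeff_sub, coeff_X_mul_pderiv, coeff_C_mul, sub_mul]
  have hs := congrArg (coeff (m + Finsupp.single s 1)) hsum
  rw [coeff_sum, Finset.sum_eq_single_of_mem s (Finset.mem_univ s), add_comm m, coeff_X_mul,
    hcoeff, coeff_zero] at hs
  · have := (mul_eq_zero.1 hs).resolve_right (mem_support_iff.1 hm)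
    exact_mod_cast sub_eq_zero.1 this
  · intro i _ his
    rw [coeff_X_mul', hcoeff]
    refine ite_eq_right_iff.2 fun _ => mul_eq_zero_of_right _ (notMem_support_iff.1 fun hmem => ?_)
    have := hmax _ hmem
    simp [his] at this

lemma apply_le_of_mem_support [CharZero k] (hQ : Q ∈ sl2Invariants k b) {m : σ →₀ ℕ}
    (hm : m ∈ Q.support) (s : σ) : (m s : ℤ) ≤ b s := by
  obtain ⟨n, -, hn, hmax⟩ := exists_mem_support_apply_eq hQ (support_nonempty.1 ⟨m, hm⟩) s
  exact hn ▸ Int.ofNat_le.2 (hmax m hm)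

lemma sl2Invariants_eq_bot_of_neg [CharZero k] {s : σ} (hs : b s < 0) :
    sl2Invariants k b = ⊥ := by
  refine (Submodule.eq_bot_iff _).2 fun Q hQ => by_contra fun hQ0 => ?_
  obtain ⟨m, -, hm, -⟩ := exists_mem_support_apply_eq hQ hQ0 s
  lia

lemma sl2Invariants_single_eq_bot [CharZero k] {n : ℤ} (hn : n ≠ 0) :
    sl2Invariants k (Pi.single i n) = ⊥ := by
  refine (Submodule.eq_bot_iff _).2 fun Q hQ => by_contra fun hQ0 => ?_
  obtain ⟨m, hm, hmi, -⟩ := exists_mem_support_apply_eq hQ hQ0 i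
  have hdeg := two_mul_degree_eq hQ hm
  have hle : (m i : ℤ) ≤ ∑ s, (m s : ℤ) :=
    Finset.single_le_sum (f := fun s => (m s : ℤ)) (fun _ _ => by positivity) (Finset.mem_univ i)
  simp only [Pi.single_eq_same, Fintype.sum_pi_single'] at hmi hdeg
  lia

lemma sl2Invariants_zero [CharZero k] :
    sl2Invariants k (0 : σ → ℤ) = Submodule.span k {1} := by
  refine le_antisymm (fun Q hQ => ?_) ?_
  · rw [Submodule.mem_span_singleton]
    refine ⟨coeff 0 Q, ?_⟩
    rw [smul_eq_C_mul, mul_one, eq_comm, ← totalDegree_eq_zero_iff_eq_C, totalDegree_eq_zero_iff]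
    intro m hm s
    have := apply_le_of_mem_support hQ hm s
    simpa using this
  · rw [Submodule.span_singleton_le_iff_mem]
    simp [mem_sl2Invariants, linForm]

end Support

end PolynomialInvariants

section ClebschGordan

variable {k σ : Type*} [Field k] {w b : σ → ℤ} {Q R : MvPolynomial σ k} {i j : σ}

/-- The substitution `xᵢ ↦ x_j`. -/
def mergeVars (k : Type*) [Field k] (i j : σ) : MvPolynomial σ k →ₐ[k] MvPolynomial σ k :=
  rename (Function.update id i j)

lemma mergeVars_X_same (i j : σ) : mergeVars k i j (X i) = X j := by
  simp [mergeVars]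

lemma mergeVars_X_of_ne {s : σ} (h : s ≠ i) : mergeVars k i j (X s) = X s := by
  simp [mergeVars, h]

lemma X_sub_X_ne_zero (hij : i ≠ j) : (X i - X j : MvPolynomial σ k) ≠ 0 :=
  sub_ne_zero.2 fun h => hij (X_injective h)

lemma mergeVars_eq_zero_iff : mergeVars k i j Q = 0 ↔ X i - X j ∣ Q := by
  have hdvd : X i - X j ∣ Q - mergeVars k i j Q := by
    induction Q using MvPolynomial.induction_on with
    | C a => simp [mergeVars]
    | add p q hp hq => simpa [map_add, add_sub_add_comm] using dvd_add hp hq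
    | mul_X p s hp =>
      have hs : X i - X j ∣ X s - mergeVars k i j (X s) := by
        by_cases h : s = i
        · rw [h, mergeVars_X_same]
        · rw [mergeVars_X_of_ne h, sub_self]
          exact dvd_zero _
      rw [map_mul]
      exact dvd_mul_sub_mul hp hs
  refine ⟨fun h => by simpa [h] using hdvd, ?_⟩
  rintro ⟨G, rfl⟩
  by_cases hij : j = i
  · simp [hij]
  · rw [map_mul, map_sub, mergeVars_X_same, mergeVars_X_of_ne hij, sub_self, zero_mul]

/-- The polar operator, which shifts one unit of weight from `x_j` to `xᵢ`. -/
def polar (b : σ → ℤ) (i j : σ) (Q : MvPolynomial σ k) : MvPolynomial σ k :=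
  C (b j : k) * Q + (X i - X j) * pderiv j Q

lemma mergeVars_polar (hij : i ≠ j) :
    mergeVars k i j (polar b i j Q) = (b j : k) • mergeVars k i j Q := by
  rw [polar, map_add, map_mul, map_mul, map_sub, mergeVars_X_same, mergeVars_X_of_ne hij.symm,
    sub_self, zero_mul, add_zero, ← algebraMap_eq, AlgHom.commutes, Algebra.smul_def]

variable [Fintype σ]

lemma mergeVars_linForm (hi : w i = 0) : mergeVars k i j (linForm k w) = linForm k w := by
  rw [linForm, map_sum]
  refine Finset.sum_congr rfl fun s _ => ?_
  by_cases hs : s = i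
  · rw [hs, hi, zero_smul, map_zero]
  · rw [map_zsmul, mergeVars_X_of_ne hs]

lemma mergeVars_mem {x y : ℤ} (hi : w i = 0) (hij : i ≠ j)
    (hQ : Q ∈ sl2Invariants k (w + Pi.single j y + Pi.single i x)) :
    mergeVars k i j Q ∈ sl2Invariants k (w + Pi.single j (x + y)) := by
  have hlowering : mergeVars k i j (lowering k σ Q) = lowering k σ (mergeVars k i j Q) :=
    rename_derivation (fun s => by rw [lowering_X, lowering_X, map_one]) Q
  have hraising : mergeVars k i j (raising k σ Q) = raising k σ (mergeVars k i j Q) :=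
    rename_derivation (fun s => by rw [raising_X, raising_X, map_pow, rename_X]) Q
  constructor
  · rw [← hlowering, hQ.1, map_zero]
  · rw [← hraising, hQ.2, map_mul, linForm_add, linForm_add, linForm_add, map_add, map_add,
      mergeVars_linForm hi, linForm_single, linForm_single, linForm_single, map_zsmul, map_zsmul,
      mergeVars_X_same, mergeVars_X_of_ne hij.symm, add_smul]
    ring

lemma mergeVars_eq_self [CharZero k] (hi : b i = 0) (hQ : Q ∈ sl2Invariants k b) :
    mergeVars k i j Q = Q := by
  refine (hom_congr_vars (f₁ := (mergeVars k i j : MvPolynomial σ k →+* MvPolynomial σ k))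
    (f₂ := RingHom.id _) (by ext; simp [mergeVars]) (fun s hs _ => ?_) rfl :)
  obtain ⟨m, hm, hms⟩ := (mem_vars_iff_mem_support s).1 hs
  refine mergeVars_X_of_ne fun h => ?_
  have := apply_le_of_mem_support hQ hm i
  subst h
  simp only [Finsupp.mem_support_iff] at hms
  lia

lemma X_sub_X_mul_mem_sl2Invariants_iff (hij : i ≠ j) :
    (X i - X j) * Q ∈ sl2Invariants k (b + Pi.single j 1 + Pi.single i 1) ↔
      Q ∈ sl2Invariants k b := by
  have hne : (X i - X j : MvPolynomial σ k) ≠ 0 := X_sub_X_ne_zero hij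
  have hlowering : lowering k σ ((X i - X j) * Q) = (X i - X j) * lowering k σ Q := by
    simp [lowering_X]
  have hraising : raising k σ ((X i - X j) * Q) -
      linForm k (b + Pi.single j 1 + Pi.single i 1) * ((X i - X j) * Q) =
      (X i - X j) * (raising k σ Q - linForm k b * Q) := by
    simp only [Derivation.leibniz, map_sub, raising_X, linForm_add, linForm_single, smul_eq_mul,
      one_smul]
    ring
  rw [mem_sl2Invariants, mem_sl2Invariants, hlowering, mul_eq_zero_iff_left hne,
    ← sub_eq_zero (a := raising k σ ((X i - X j) * Q)), hraising, mul_eq_zero_iff_left hne,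
    sub_eq_zero]

lemma lowering_pderiv (j : σ) (p : MvPolynomial σ k) :
    lowering k σ (pderiv j p) = pderiv j (lowering k σ p) := by
  have hcomm : ⁅lowering k σ, (pderiv j : Derivation k (MvPolynomial σ k) _)⁆ = 0 :=
    derivation_ext fun s => by
      simp [Derivation.commutator_apply, lowering_X, pderiv_X, Pi.single_apply, apply_ite]
  rw [← sub_eq_zero, ← Derivation.commutator_apply, hcomm, Derivation.zero_apply]

lemma raising_pderiv (j : σ) (p : MvPolynomial σ k) :
    raising k σ (pderiv j p) = pderiv j (raising k σ p) - 2 * X j * pderiv j p := by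
  have hcomm : ⁅raising k σ, (pderiv j : Derivation k (MvPolynomial σ k) _)⁆ =
      (-(2 * X j) : MvPolynomial σ k) • pderiv j :=
    derivation_ext fun s => by
      by_cases hs : s = j <;>
        simp [Derivation.commutator_apply, raising_X, pderiv_X, hs]
  have hp := congrArg (· p) hcomm
  simp only [Derivation.commutator_apply, Derivation.smul_apply, smul_eq_mul] at hp
  linear_combination hp

lemma polar_mem (hQ : Q ∈ sl2Invariants k b) :
    polar b i j Q ∈ sl2Invariants k (b - Pi.single j 1 + Pi.single i 1) := by
  have hlin : linForm k (b - Pi.single j 1 + Pi.single i 1) = linForm k b - X j + X i := by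
    rw [linForm_add, linForm_single, one_smul, ← sub_add_cancel b (Pi.single j 1), linForm_add,
      linForm_single, one_smul, sub_add_cancel, add_sub_cancel_right]
  constructor
  · simp [polar, lowering_X, lowering_pderiv, hQ.1]
  · simp only [polar, map_add, map_sub, Derivation.leibniz, raising_X, raising_pderiv,
      hQ.2, pderiv_linForm, hlin, smul_eq_mul, derivation_C]
    ring

lemma exists_mergeVars_eq [CharZero k] (hi : w i = 0) (hj : w j = 0) (hij : i ≠ j) (x y : ℕ)
    (hR : R ∈ sl2Invariants k (w + Pi.single j (x + y : ℤ))) :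
    ∃ Q ∈ sl2Invariants k (w + Pi.single j (y : ℤ) + Pi.single i (x : ℤ)),
      mergeVars k i j Q = R := by
  induction x generalizing y with
  | zero =>
    refine ⟨R, by simpa using hR, mergeVars_eq_self ?_ hR⟩
    simp [hi, hij]
  | succ x ih =>
    have hxy : ((x + 1 : ℕ) + y : ℤ) = x + (y + 1 : ℕ) := by push_cast; ring
    obtain ⟨Q, hQ, rfl⟩ := ih (y + 1) (hxy ▸ hR)
    set b : σ → ℤ := w + Pi.single j ((y + 1 : ℕ) : ℤ) + Pi.single i (x : ℤ) with hb
    have hbj : b j = y + 1 := by simp [hb, hj, hij.symm]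
    have hweight : b - Pi.single j 1 + Pi.single i 1 =
        w + Pi.single j (y : ℤ) + Pi.single i ((x + 1 : ℕ) : ℤ) := by
      rw [hb, Nat.cast_succ, Nat.cast_succ, Pi.single_add, Pi.single_add]
      abel
    refine ⟨(b j : k)⁻¹ • polar b i j Q, hweight ▸ Submodule.smul_mem _ _ (polar_mem hQ), ?_⟩
    rw [map_smul, mergeVars_polar hij, inv_smul_smul₀]
    rw [hbj]
    exact_mod_cast y.succ_ne_zero

lemma rank_sl2Invariants_add_single_add_single [CharZero k] (hi : w i = 0) (hj : w j = 0)
    (hij : i ≠ j) (x y : ℕ) :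
    Module.rank k (sl2Invariants k (w + Pi.single j (y : ℤ) + Pi.single i (x : ℤ))) =
      Module.rank k (sl2Invariants k (w + Pi.single j (x + y : ℤ))) +
      Module.rank k (sl2Invariants k (w + Pi.single j (y - 1 : ℤ) + Pi.single i (x - 1 : ℤ))) := by
  set b : σ → ℤ := w + Pi.single j (y - 1 : ℤ) + Pi.single i (x - 1 : ℤ) with hb
  have hweight : w + Pi.single j (y : ℤ) + Pi.single i (x : ℤ) =
      b + Pi.single j 1 + Pi.single i 1 := by
    rw [hb, Pi.single_sub, Pi.single_sub]
    abel
  let merge : sl2Invariants k (w + Pi.single j (y : ℤ) + Pi.single i (x : ℤ)) →ₗ[k]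
      sl2Invariants k (w + Pi.single j (x + y : ℤ)) :=
    (mergeVars k i j).toLinearMap.restrict fun Q hQ => mergeVars_mem hi hij hQ
  have hsurj : Function.Surjective merge := fun ⟨R, hR⟩ =>
    let ⟨Q, hQ, hQR⟩ := exists_mergeVars_eq hi hj hij x y hR
    ⟨⟨Q, hQ⟩, Subtype.ext hQR⟩
  let mulDiff : sl2Invariants k b →ₗ[k]
      sl2Invariants k (w + Pi.single j (y : ℤ) + Pi.single i (x : ℤ)) :=
    (LinearMap.mulLeft k (X i - X j)).restrict fun Q hQ =>
      hweight ▸ (X_sub_X_mul_mem_sl2Invariants_iff hij).2 hQ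
  have hinj : Function.Injective mulDiff := fun P Q h =>
    Subtype.ext (mul_left_cancel₀ (X_sub_X_ne_zero hij) (congrArg Subtype.val h))
  have hker : LinearMap.ker merge = LinearMap.range mulDiff := by
    ext ⟨Q, hQ⟩
    refine (Subtype.ext_iff.trans mergeVars_eq_zero_iff).trans ⟨?_, ?_⟩
    · rintro ⟨G, rfl⟩
      exact ⟨⟨G, (X_sub_X_mul_mem_sl2Invariants_iff hij).1 (hweight ▸ hQ)⟩, rfl⟩
    · rintro ⟨⟨G, hG⟩, h⟩
      exact ⟨G, (congrArg Subtype.val h).symm⟩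
  rw [LinearMap.rank_eq_of_surjective hsurj, hker,
    ← (LinearEquiv.ofInjective mulDiff hinj).rank_eq]

/-- The Clebsch–Gordan rule `V_x ⊗ V_y = ⨁ₜ V_{x+y-2t}`. -/
lemma rank_sl2Invariants_eq_sum [CharZero k] (hi : w i = 0) (hj : w j = 0) (hij : i ≠ j)
    (x y : ℕ) :
    Module.rank k (sl2Invariants k (w + Pi.single j (y : ℤ) + Pi.single i (x : ℤ))) =
      ∑ t ∈ Finset.range (min x y + 1),
        Module.rank k (sl2Invariants k (w + Pi.single j ((x + y - 2 * t : ℕ) : ℤ))) := by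
  induction x generalizing y with
  | zero =>
    have hbot : sl2Invariants k (w + Pi.single j (y - 1 : ℤ) + Pi.single i ((0 : ℕ) - 1 : ℤ)) = ⊥ :=
      sl2Invariants_eq_bot_of_neg (s := i) (by simp [hi, hij])
    rw [rank_sl2Invariants_add_single_add_single hi hj hij, hbot, rank_bot]
    simp
  | succ x ih =>
    obtain _ | y := y
    · have hbot : sl2Invariants k
          (w + Pi.single j ((0 : ℕ) - 1 : ℤ) + Pi.single i ((x + 1 : ℕ) - 1 : ℤ)) = ⊥ :=
        sl2Invariants_eq_bot_of_neg (s := j) (by simp [hj, hij.symm])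
      rw [rank_sl2Invariants_add_single_add_single hi hj hij, hbot, rank_bot, add_zero,
        Nat.min_zero, zero_add, Finset.sum_range_one]
      norm_cast
    · have hsub (t : ℕ) : x + 1 + (y + 1) - 2 * (t + 1) = x + y - 2 * t := by lia
      rw [rank_sl2Invariants_add_single_add_single hi hj hij, Nat.succ_min_succ,
        Finset.sum_range_succ', Nat.cast_succ x, Nat.cast_succ y, add_sub_cancel_right,
        add_sub_cancel_right, ih, add_comm]
      congr 1
      exact Finset.sum_congr rfl fun t _ => by rw [hsub]

/-- The multiplicity of the trivial representation of `sl₂` in `V_x ⊗ V_n ⊗ ⋯ ⊗ V_n` with `m`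
factors `V_n`, where `V_n` is the irreducible representation of dimension `n + 1`. -/
def trivialMultiplicity (n : ℕ) : ℕ → ℕ → ℕ
  | 0, x => if x = 0 then 1 else 0
  | m + 1, x => ∑ t ∈ Finset.range (min x n + 1), trivialMultiplicity n m (x + n - 2 * t)

lemma rank_sl2Invariants_add_single [CharZero k] (n : ℕ) {S : Finset σ} (hi : i ∉ S) (x : ℕ) :
    Module.rank k (sl2Invariants k
      ((∑ s ∈ S, Pi.single s (n : ℤ) : σ → ℤ) + Pi.single i (x : ℤ))) =
      trivialMultiplicity n S.card x := by
  induction S using Finset.cons_induction generalizing i x with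
  | empty =>
    rw [Finset.sum_empty, zero_add, Finset.card_empty, trivialMultiplicity]
    split_ifs with hx
    · rw [hx, Nat.cast_zero, Pi.single_zero, sl2Invariants_zero, Nat.cast_one]
      exact Module.rank_eq_one_iff_finrank_eq_one.2 (finrank_span_singleton one_ne_zero)
    · rw [sl2Invariants_single_eq_bot (by exact_mod_cast hx), rank_bot, Nat.cast_zero]
  | cons j S hj ih =>
    have hsum {s : σ} (hs : s ∉ S) : (∑ s ∈ S, Pi.single s (n : ℤ) : σ → ℤ) s = 0 := by
      rw [Finset.sum_apply, Finset.sum_pi_single, if_neg hs]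
    rw [Finset.mem_cons, not_or] at hi
    rw [Finset.sum_cons, add_comm (Pi.single j _), Finset.card_cons, trivialMultiplicity,
      rank_sl2Invariants_eq_sum (hsum hi.2) (hsum hj) hi.1, Nat.cast_sum]
    exact Finset.sum_congr rfl fun t _ => ih hj _

lemma finrank_sl2Invariants_const [CharZero k] (n : ℕ) {m : ℕ} (hm : Fintype.card σ = m + 1) :
    Module.finrank k (sl2Invariants k (fun _ : σ => (n : ℤ))) = trivialMultiplicity n m n := by
  obtain ⟨i⟩ : Nonempty σ := Fintype.card_pos_iff.1 (hm ▸ m.succ_pos)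
  have hconst : (fun _ : σ => (n : ℤ)) =
      ∑ s ∈ Finset.univ.erase i, Pi.single s (n : ℤ) + Pi.single i (n : ℤ) := by
    rw [Finset.sum_erase_add _ _ (Finset.mem_univ i), Finset.univ_sum_single]
  rw [Module.finrank, hconst, rank_sl2Invariants_add_single n (Finset.notMem_erase i _)]
  simp [hm]

end ClebschGordan

section LowestWeight

variable {k σ : Type*} [Field k] [Fintype σ] {p : MvPolynomial σ k}

lemma raising_lowering_sub_linForm_mul {d : ℕ} (b : σ → ℤ) (hp : p.IsHomogeneous d) :
    raising k σ (lowering k σ p) - linForm k b * lowering k σ p =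
      lowering k σ (raising k σ p - linForm k b * p) + ((∑ i, b i : ℤ) - 2 * d : k) • p := by
  have hcomm := congrArg (· p) (lowering_commutator_raising (k := k) (σ := σ))
  simp only [Derivation.commutator_apply, Derivation.smul_apply, euler_apply,
    hp.sum_X_mul_pderiv] at hcomm
  rw [map_sub, Derivation.leibniz, lowering_linForm, sub_smul]
  simp only [smul_eq_mul, nsmul_eq_mul, smul_eq_C_mul, map_mul, map_ofNat, map_natCast] at hcomm ⊢
  linear_combination -hcomm

lemma isHomogeneous_lowering {d : ℕ} (hp : p.IsHomogeneous d) :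
    (lowering k σ p).IsHomogeneous (d - 1) := by
  rw [lowering_apply]
  exact IsHomogeneous.sum _ _ _ fun i _ => hp.pderiv

/-- The conditions say that `p` is a highest weight vector of weight zero, for the representation
of `sl₂` on all polynomials. -/
lemma lowering_eq_zero_of_raising_eq [CharZero k] {b : σ → ℤ} {d : ℕ} (hp : p.IsHomogeneous d)
    (hd : 2 * (d : ℤ) = ∑ i, b i) (hraising : raising k σ p = linForm k b * p) :
    lowering k σ p = 0 := by
  set P : ℕ → MvPolynomial σ k := fun n => (lowering k σ)^[n] p
  have hPsucc (n : ℕ) : P (n + 1) = lowering k σ (P n) := Function.iterate_succ_apply' _ _ _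
  have hPhom (n : ℕ) : (P n).IsHomogeneous (d - n) := by
    induction n with
    | zero => exact hp
    | succ n ih => exact hPsucc n ▸ isHomogeneous_lowering ih
  have hstep (n : ℕ) (hn : n ≤ d) :
      raising k σ (P (n + 1)) - linForm k b * P (n + 1) = (n * (n + 1) : k) • P n := by
    induction n with
    | zero =>
      rw [hPsucc, raising_lowering_sub_linForm_mul b (hPhom 0), ← hd]
      simp [P, hraising]
    | succ n ih =>
      rw [hPsucc, raising_lowering_sub_linForm_mul b (hPhom (n + 1)), ih (by lia),
        Derivation.map_smul, ← hPsucc, ← add_smul, ← hd, Nat.cast_sub hn]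
      congr 1
      push_cast
      ring
  have hlast : P (d + 1) = 0 := by
    have hdeg : (P d).totalDegree ≤ 0 := (hPhom d).totalDegree_le.trans_eq (Nat.sub_self d)
    rw [hPsucc, totalDegree_eq_zero_iff_eq_C.1 (Nat.le_zero.1 hdeg), derivation_C]
  have hdescend (n : ℕ) (hn : n ≤ d) (hPn : P (n + 1) = 0) : P 1 = 0 := by
    induction n with
    | zero => exact hPn
    | succ n ih =>
      have hsmul := hstep (n + 1) hn
      rw [hPn, map_zero, mul_zero, sub_zero, eq_comm, smul_eq_zero] at hsmul
      exact ih (by lia) (hsmul.resolve_left (by norm_cast))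
  exact hdescend d le_rfl hlast

end LowestWeight

section Translation

variable {k σ : Type*} [Field k] [CharZero k] [Fintype σ] {p : MvPolynomial σ k}

lemma aeval_X_sub_X_eq_self (hp : lowering k σ p = 0) (j : σ) :
    aeval (fun s => (X s - X j : MvPolynomial σ k)) p = p := by
  let translate : MvPolynomial σ k →ₐ[k] Polynomial (MvPolynomial σ k) :=
    aeval fun s => Polynomial.C (X s) + Polynomial.X
  have heval (c q : MvPolynomial σ k) :
      (translate q).eval c = aeval (fun s => X s + c) q := by
    induction q using MvPolynomial.induction_on with
    | C a => simp [translate, Polynomial.algebraMap_apply]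
    | add q r hq hr => simp [hq, hr]
    | mul_X q s hq => simp [hq, translate]
  have hderivative (q : MvPolynomial σ k) :
      Polynomial.derivative (translate q) = translate (lowering k σ q) := by
    induction q using MvPolynomial.induction_on with
    | C a => simp [translate, Polynomial.algebraMap_apply]
    | add q r hq hr => simp [hq, hr]
    | mul_X q s hq => simp [hq, translate, Derivation.leibniz, lowering_X]; ring
  have hconst := Polynomial.eq_C_of_derivative_eq_zero
    ((hderivative p).trans (by rw [hp, map_zero]))
  calc
    aeval (fun s => (X s - X j : MvPolynomial σ k)) p = (translate p).eval (-X j) := by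
      simp only [heval, sub_eq_add_neg]
    _ = (translate p).eval 0 := by rw [hconst, Polynomial.eval_C, Polynomial.eval_C]
    _ = p := by simp [heval]

lemma X_sub_X_dvd_of_lowering_eq_zero {i j : σ} (hp : lowering k σ p = 0)
    (hsupport : ∀ m ∈ p.support, 0 < m i + m j) : X i - X j ∣ p := by
  rw [← mergeVars_eq_zero_iff, ← aeval_X_sub_X_eq_self hp j, p.as_sum, map_sum, map_sum]
  refine Finset.sum_eq_zero fun m hm => ?_
  obtain ⟨s, hs, hms⟩ : ∃ s, (s = i ∨ s = j) ∧ m s ≠ 0 := by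
    by_contra! h
    have := hsupport m hm
    simp [h i, h j] at this
  rw [aeval_monomial, map_mul, map_finsuppProd, Finsupp.prod,
    Finset.prod_eq_zero (Finsupp.mem_support_iff.2 hms), mul_zero]
  have hmerge {t : σ} (ht : t = i ∨ t = j) : mergeVars k i j (X t) = X j := by
    rcases eq_or_ne t i with rfl | hti
    · exact mergeVars_X_same _ _
    · rw [mergeVars_X_of_ne hti, ht.resolve_left hti]
  rw [map_pow, map_sub, hmerge hs, hmerge (.inr rfl), sub_self, zero_pow hms]

end Translation

section RationalDerivations

variable {k : Type} [Field k] {l : ℕ}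
  {V W : Derivation k (RF k l) (RF k l)} {D : Fin l → Derivation k (RF k l) (RF k l)}

lemma derivation_algebraMap {U : Derivation k (MvPolynomial (Fin l) k) (MvPolynomial (Fin l) k)}
    (h : ∀ i, V (zv i) = algebraMap _ _ (U (X i))) (p : MvPolynomial (Fin l) k) :
    V (algebraMap _ _ p) = algebraMap _ _ (U p) := by
  induction p using MvPolynomial.induction_on with
  | C a => rw [algebraMap_C, V.map_algebraMap, derivation_C, map_zero]
  | add p q hp hq => simp only [map_add, hp, hq]
  | mul_X p i hp =>
    have hi : V (algebraMap _ (RF k l) (X i)) = algebraMap _ _ (U (X i)) := h i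
    simp only [map_mul, Derivation.leibniz, hp, hi, map_add, smul_eq_mul]

lemma derivation_RF_ext (h : ∀ i, V (zv i) = W (zv i)) : V = W := by
  have hpoly (p : MvPolynomial (Fin l) k) : V (algebraMap _ _ p) = W (algebraMap _ _ p) := by
    induction p using MvPolynomial.induction_on with
    | C a => rw [algebraMap_C, V.map_algebraMap, W.map_algebraMap]
    | add p q hp hq => simp only [map_add, hp, hq]
    | mul_X p i hp =>
      have hi : V (algebraMap _ (RF k l) (X i)) = W (algebraMap _ (RF k l) (X i)) := h i
      simp only [map_mul, Derivation.leibniz, hp, hi]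
  ext α
  obtain ⟨p, q, -, rfl⟩ := IsFractionRing.div_surjective (A := MvPolynomial (Fin l) k) α
  rw [Derivation.leibniz_div, Derivation.leibniz_div, hpoly, hpoly]

lemma derivation_zpow (V : Derivation k (RF k l) (RF k l)) {x c : RF k l} (hx : x ≠ 0)
    (h : V x = c * x) (n : ℤ) : V (x ^ n) = n * c * x ^ n := by
  rw [Derivation.leibniz_zpow, h, smul_eq_mul, zpow_sub_one₀ hx, zsmul_eq_mul]
  field_simp

lemma derivation_prod {ι : Type} (V : Derivation k (RF k l) (RF k l)) {s : Finset ι}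
    {x c : ι → RF k l} (h : ∀ i ∈ s, V (x i) = c i * x i) :
    V (∏ i ∈ s, x i) = (∑ i ∈ s, c i) * ∏ i ∈ s, x i := by
  induction s using Finset.cons_induction with
  | empty => simp
  | cons i s hi ih =>
    rw [Finset.prod_cons, Finset.sum_cons, Derivation.leibniz, h i (Finset.mem_cons_self i s),
      ih fun j hj => h j (Finset.mem_cons_of_mem hj), smul_eq_mul, smul_eq_mul]
    ring

lemma derivation_diffProd (V : Derivation k (RF k l) (RF k l)) {c : Fin l × Fin l → RF k l}
    (h : ∀ p, V (zv p.1 - zv p.2) = c p * (zv p.1 - zv p.2)) (e : Fin l × Fin l → ℤ) :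
    V (diffProd k e) = (∑ p ∈ orderedPairs l, e p * c p) * diffProd k e :=
  derivation_prod V fun p hp =>
    derivation_zpow V (zv_sub_zv_ne_zero (mem_orderedPairs.1 hp).ne) (h p) (e p)

/-- The vector field `∑ zᵢ^r ∂ᵢ` over the variables in `S`. For `r = 0, 1, 2` these fields span
a copy of `sl₂`. -/
def powerField (D : Fin l → Derivation k (RF k l) (RF k l)) (S : Finset (Fin l)) (r : ℕ) :
    Derivation k (RF k l) (RF k l) :=
  ∑ i ∈ S, (zv i ^ r : RF k l) • D i

lemma powerField_apply (S : Finset (Fin l)) (r : ℕ) (α : RF k l) :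
    powerField D S r α = ∑ i ∈ S, zv i ^ r * D i α := by
  simp only [powerField, ← Derivation.coeFnAddMonoidHom_apply, map_sum, Finset.sum_apply]
  rfl

lemma powerField_zv (hD : IsPartialDeriv D) (S : Finset (Fin l)) (r : ℕ) (j : Fin l) :
    powerField D S r (zv j) = if j ∈ S then zv j ^ r else 0 := by
  simp [powerField_apply, hD _ j]

lemma powerField_univ_zero_algebraMap (hD : IsPartialDeriv D) (p : MvPolynomial (Fin l) k) :
    powerField D Finset.univ 0 (algebraMap _ _ p) = algebraMap _ _ (lowering k (Fin l) p) :=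
  derivation_algebraMap (fun i => by simp [powerField_zv hD, lowering_X]) p

lemma powerField_univ_two_algebraMap (hD : IsPartialDeriv D) (p : MvPolynomial (Fin l) k) :
    powerField D Finset.univ 2 (algebraMap _ _ p) = algebraMap _ _ (raising k (Fin l) p) :=
  derivation_algebraMap (fun i => by rw [powerField_zv hD, raising_X, map_pow]; simp [zv]) p

lemma powerField_univ_zero_diffProd (hD : IsPartialDeriv D) (e : Fin l × Fin l → ℤ) :
    powerField D Finset.univ 0 (diffProd k e) = 0 := by
  rw [derivation_diffProd _ (c := 0) fun p => by simp [powerField_zv hD]]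
  simp

lemma algebraMap_linForm (b : Fin l → ℤ) :
    algebraMap _ (RF k l) (linForm k b) = ∑ i, (b i : RF k l) * zv i := by
  simp only [linForm, map_sum, map_zsmul, ← zsmul_eq_mul]
  rfl

lemma sum_mul_zv_add_zv (e : Fin l × Fin l → ℤ) :
    ∑ p ∈ orderedPairs l, (e p : RF k l) * (zv p.1 + zv p.2) =
      algebraMap _ _ (linForm k (incidentSum e)) := by
  have hpair (p : Fin l × Fin l) (hp : p ∈ orderedPairs l) :
      ∑ i, ((if p.1 = i ∨ p.2 = i then e p else 0 : ℤ) : RF k l) * zv i =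
        (e p : RF k l) * (zv p.1 + zv p.2) := by
    have hne := (mem_orderedPairs.1 hp).ne
    rw [← Finset.sum_subset (Finset.subset_univ {p.1, p.2}) fun i _ hi => by
      simp_all [eq_comm], Finset.sum_pair hne]
    simp [mul_add]
  simp only [algebraMap_linForm, incidentSum, Finset.sum_filter, Int.cast_sum, Finset.sum_mul]
  rw [Finset.sum_comm]
  exact Finset.sum_congr rfl fun p hp => (hpair p hp).symm

lemma powerField_univ_two_diffProd (hD : IsPartialDeriv D) (e : Fin l × Fin l → ℤ) :
    powerField D Finset.univ 2 (diffProd k e) =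
      algebraMap _ _ (linForm k (incidentSum e)) * diffProd k e := by
  rw [derivation_diffProd _ (c := fun p => zv p.1 + zv p.2) fun p => by
    simp only [map_sub, powerField_zv hD, Finset.mem_univ, if_true]; ring, sum_mul_zv_add_zv]

end RationalDerivations

section Twists

variable {k : Type} [Field k] {l : ℕ}
  {D : Fin l → Derivation k (RF k l) (RF k l)} {α : RF k l} {e : Fin l × Fin l → ℤ}
  {Q : MvPolynomial (Fin l) k} {J : Finset (Fin l)}

/-- The weights for which `Q * diffProd k e` is `(4,…,4)`-regular exactly when `Q` is killed by the
raising operator of `sl₂`. -/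
def twistWeight (e : Fin l × Fin l → ℤ) (i : Fin l) : ℤ :=
  -4 - incidentSum e i

/-- The products of `diffProd k e` with polynomials that are both translation invariant and
`(4,…,4)`-regular. -/
def invariantTwists (k : Type) [Field k] (e : Fin l × Fin l → ℤ) : Submodule k (RF k l) :=
  (sl2Invariants k (twistWeight e)).map
    (LinearMap.mulRight k (diffProd k e) ∘ₗ
      (IsScalarTower.toAlgHom k (MvPolynomial (Fin l) k) (RF k l)).toLinearMap)

lemma mem_invariantTwists : α ∈ invariantTwists k e ↔
    ∃ Q ∈ sl2Invariants k (twistWeight e), algebraMap _ _ Q * diffProd k e = α :=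
  Iff.rfl

lemma finrank_invariantTwists (e : Fin l × Fin l → ℤ) :
    Module.finrank k (invariantTwists k e) =
      Module.finrank k (sl2Invariants k (twistWeight e)) := by
  refine (Submodule.equivMapOfInjective _ ?_ _).finrank_eq.symm
  exact (mul_left_injective₀ (diffProd_ne_zero (k := k) e)).comp (IsFractionRing.injective _ _)

lemma powerField_univ_zero_eq_zero_iff (hD : IsPartialDeriv D) :
    powerField D Finset.univ 0 (algebraMap _ _ Q * diffProd k e) = 0 ↔
      lowering k (Fin l) Q = 0 := by
  rw [Derivation.leibniz, powerField_univ_zero_diffProd hD, powerField_univ_zero_algebraMap hD,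
    smul_zero, zero_add, smul_eq_mul, mul_eq_zero, or_iff_right (diffProd_ne_zero e)]
  exact map_eq_zero_iff _ (IsFractionRing.injective _ _)

lemma sum_regular_eq_powerField :
    ∑ i, (zv i ^ 2 * D i α + 4 * zv i * α) =
      powerField D Finset.univ 2 α + algebraMap _ _ (linForm k fun _ : Fin l => 4) * α := by
  rw [Finset.sum_add_distrib, powerField_apply, algebraMap_linForm, Finset.sum_mul]
  norm_num

lemma sum_regular_eq_zero_iff (hD : IsPartialDeriv D) :
    ∑ i, (zv i ^ 2 * D i (algebraMap _ _ Q * diffProd k e) +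
        4 * zv i * (algebraMap _ _ Q * diffProd k e)) = 0 ↔
      raising k (Fin l) Q = linForm k (twistWeight e) * Q := by
  have hweight : linForm k (twistWeight e) =
      -(linForm k (fun _ => 4) + linForm k (incidentSum e)) := by
    rw [← linForm_add, eq_neg_iff_add_eq_zero, ← linForm_add]
    simp [twistWeight, linForm]
  have hsum : ∑ i, (zv i ^ 2 * D i (algebraMap _ _ Q * diffProd k e) +
      4 * zv i * (algebraMap _ _ Q * diffProd k e)) =
        algebraMap _ _ (raising k (Fin l) Q - linForm k (twistWeight e) * Q) * diffProd k e := by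
    rw [sum_regular_eq_powerField, hweight]
    simp only [Derivation.leibniz, powerField_univ_two_diffProd hD,
      powerField_univ_two_algebraMap hD, map_sub, map_mul, map_add, map_neg, smul_eq_mul]
    ring
  rw [hsum, mul_eq_zero, or_iff_left (diffProd_ne_zero e),
    map_eq_zero_iff _ (IsFractionRing.injective _ _), sub_eq_zero]

lemma isHomogeneousOn_univ_iff {d : ℤ} :
    IsHomogeneousOn Finset.univ d (algebraMap _ _ Q * diffProd k e) ↔
      ∀ m ∈ Q.support, ∑ i, (m i : ℤ) = d - innerSum e Finset.univ := by
  have hsplit : IsSplitBy e Finset.univ := fun p _ h => by simp at h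
  have hne : (HahnSeries.single (innerSum e Finset.univ) (diffProd k e) :
      LaurentSeries (RF k l)) ≠ 0 := HahnSeries.single_ne_zero (diffProd_ne_zero e)
  have hsingle : (HahnSeries.single d (algebraMap _ _ Q * diffProd k e) :
      LaurentSeries (RF k l)) = HahnSeries.single (d - innerSum e Finset.univ) (algebraMap _ _ Q) *
        HahnSeries.single (innerSum e Finset.univ) (diffProd k e) := by
    rw [HahnSeries.single_mul_single, sub_add_cancel]
  rw [isHomogeneousOn_iff, map_mul, laurentExpansion_diffProd hsplit, hsingle,
    mul_left_inj' hne]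
  constructor
  · intro h m hm
    by_contra hne
    refine (coeff_laurentExpansion_algebraMap_eq_zero_iff (J := Finset.univ)).1 ?_ m hm rfl
    rw [h, HahnSeries.coeff_single_of_ne hne]
  · intro h
    rw [laurentExpansion_algebraMap, Finset.sum_congr rfl fun m hm => by rw [h m hm]]
    conv_rhs => rw [Q.as_sum, map_sum]
    exact (map_sum (HahnSeries.single.addMonoidHom _) _ _).symm

lemma le_ordAlong_mul_diffProd_iff {n : ℤ} :
    (n : WithTop ℤ) ≤ ordAlong J (α * diffProd k e) ↔
      ((n - innerSum e J : ℤ) : WithTop ℤ) ≤ ordAlong J α := by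
  rw [AddValuation.map_mul, ordAlong_diffProd]
  induction ordAlong J α using WithTop.recTopCoe with
  | top => simp
  | coe m => norm_cast; exact sub_le_iff_le_add.symm

lemma X_sub_X_dvd_of_lt_ordAlong [CharZero k] (hD : IsPartialDeriv D) {p : Fin l × Fin l}
    (hp : p ∈ orderedPairs l) {n : ℤ} (hn : e p < n)
    (htranslation : powerField D Finset.univ 0 (algebraMap _ _ Q * diffProd k e) = 0)
    (hord : (n : WithTop ℤ) ≤ ordAlong {p.1, p.2} (algebraMap _ _ Q * diffProd k e)) :
    X p.1 - X p.2 ∣ Q := by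
  refine X_sub_X_dvd_of_lowering_eq_zero
    ((powerField_univ_zero_eq_zero_iff hD).1 htranslation) fun m hm => ?_
  rw [le_ordAlong_mul_diffProd_iff, le_ordAlong_algebraMap_iff, innerSum_pair e hp] at hord
  have hm' := hord m hm
  rw [Finset.sum_pair (mem_orderedPairs.1 hp).ne] at hm'
  lia

lemma algebraMap_X_sub_X_mul_mul_diffProd {p : Fin l × Fin l} (hp : p ∈ orderedPairs l) :
    algebraMap _ (RF k l) ((X p.1 - X p.2) * Q) * diffProd k e =
      algebraMap _ _ Q * diffProd k (e + Pi.single p 1) := by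
  rw [diffProd_add, diffProd_single hp, map_mul, map_sub]
  simp only [zv]
  ring

lemma exists_eq_algebraMap_mul_diffProd_of_le [CharZero k] (hD : IsPartialDeriv D)
    (hα : α ∈ Phi k l) (htranslation : powerField D Finset.univ 0 α = 0)
    (hord : ∀ p ∈ orderedPairs l, (e p : WithTop ℤ) ≤ ordAlong {p.1, p.2} α) :
    ∃ Q : MvPolynomial (Fin l) k, α = algebraMap _ _ Q * diffProd k e := by
  obtain ⟨P, e', rfl⟩ := mem_Phi_iff.1 hα
  clear hα
  induction hn : ∑ p ∈ orderedPairs l, (e p - e' p).toNat generalizing P e' with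
  | zero =>
    obtain ⟨q, hq⟩ := exists_algebraMap_eq_diffProd (k := k) (e := e' - e) fun p hp => by
      have := Finset.sum_eq_zero_iff.1 hn p hp
      simp only [Pi.sub_apply]
      lia
    refine ⟨P * q, ?_⟩
    rw [map_mul, hq, mul_assoc, ← diffProd_add, sub_add_cancel]
  | succ n ih =>
    obtain ⟨p, hp, hlt⟩ : ∃ p ∈ orderedPairs l, e' p < e p := by
      by_contra! h
      rw [Finset.sum_eq_zero fun p hp => Int.toNat_of_nonpos (sub_nonpos.2 (h p hp))] at hn
      lia
    obtain ⟨P, rfl⟩ := X_sub_X_dvd_of_lt_ordAlong hD hp hlt htranslation (hord p hp)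
    rw [algebraMap_X_sub_X_mul_mul_diffProd hp] at htranslation hord ⊢
    refine ih P _ htranslation hord ?_
    have herase : ∑ q ∈ (orderedPairs l).erase p,
          (e q - (e' + Pi.single p 1 : Fin l × Fin l → ℤ) q).toNat =
        ∑ q ∈ (orderedPairs l).erase p, (e q - e' q).toNat :=
      Finset.sum_congr rfl fun q hq => by simp [Finset.ne_of_mem_erase hq]
    rw [← Finset.add_sum_erase _ _ hp] at hn ⊢
    rw [herase, Pi.add_apply, Pi.single_eq_same]
    lia

lemma sum_twistWeight (e : Fin l × Fin l → ℤ) :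
    ∑ i, twistWeight e i = 2 * (-(2 * (l : ℤ)) - innerSum e Finset.univ) := by
  simp only [twistWeight, Finset.sum_sub_distrib, sum_univ_incidentSum]
  simp
  ring

lemma powerField_univ_zero_of_admissible [CharZero k] (hD : IsPartialDeriv D)
    (hα : Admissible D Finset.univ α) : powerField D Finset.univ 0 α = 0 := by
  obtain ⟨hPhi, -, hregular, hhom, -⟩ := hα
  obtain ⟨Q, e, rfl⟩ := mem_Phi_iff.1 hPhi
  rw [sum_regular_eq_zero_iff hD] at hregular
  rw [isHomogeneousOn_univ_iff, Finset.card_fin] at hhom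
  rw [powerField_univ_zero_eq_zero_iff hD]
  obtain rfl | ⟨m, hm⟩ := Q.support.eq_empty_or_nonempty.imp_left support_eq_empty.1
  · exact map_zero _
  refine lowering_eq_zero_of_raising_eq (d := ∑ i, m i) (fun n hn => ?_) ?_ hregular
  · rw [Finsupp.weight_apply, Finsupp.sum_fintype _ _ (by simp)]
    simp only [Pi.one_apply, smul_eq_mul, mul_one]
    exact_mod_cast (hhom n (mem_support_iff.2 hn)).trans (hhom m hm).symm
  · push_cast
    rw [hhom m hm, sum_twistWeight]

lemma mem_invariantTwists_of_admissible [CharZero k] (hD : IsPartialDeriv D)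
    (hα : Admissible D Finset.univ α)
    (hord : ∀ p ∈ orderedPairs l, (e p : WithTop ℤ) ≤ ordAlong {p.1, p.2} α) :
    α ∈ invariantTwists k e := by
  have htranslation := powerField_univ_zero_of_admissible hD hα
  obtain ⟨Q, rfl⟩ := exists_eq_algebraMap_mul_diffProd_of_le hD hα.1 htranslation hord
  exact ⟨Q, ⟨(powerField_univ_zero_eq_zero_iff hD).1 htranslation,
    (sum_regular_eq_zero_iff hD).1 hα.2.2.1⟩, rfl⟩

lemma dependsOnlyOn_univ (α : RF k l) : dependsOnlyOn Finset.univ α := by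
  have hpoly (p : MvPolynomial (Fin l) k) :
      dependsOnlyOn Finset.univ (algebraMap _ (RF k l) p) := by
    induction p using MvPolynomial.induction_on with
    | C a => exact Subfield.subset_closure (.inl ⟨a, (algebraMap_C a).symm⟩)
    | add p q hp hq => exact map_add (algebraMap _ (RF k l)) p q ▸ Subfield.add_mem _ hp hq
    | mul_X p i hp =>
      exact map_mul (algebraMap _ (RF k l)) p (X i) ▸ Subfield.mul_mem _ hp
        (Subfield.subset_closure (.inr ⟨i, Finset.mem_univ i, rfl⟩))
  obtain ⟨p, q, -, rfl⟩ := IsFractionRing.div_surjective (A := MvPolynomial (Fin l) k) α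
  exact Subfield.div_mem _ (hpoly p) (hpoly q)

lemma isHomogeneousOn_univ_of_mem_invariantTwists [CharZero k] (hα : α ∈ invariantTwists k e) :
    IsHomogeneousOn Finset.univ (-(2 * ((Finset.univ : Finset (Fin l)).card : ℤ))) α := by
  obtain ⟨Q, hQ, rfl⟩ := mem_invariantTwists.1 hα
  refine isHomogeneousOn_univ_iff.2 fun m hm => ?_
  have hdegree := two_mul_degree_eq hQ hm
  rw [sum_twistWeight] at hdegree
  rw [Finset.card_fin]
  lia

lemma admissible_of_mem_invariantTwists [CharZero k] (hD : IsPartialDeriv D)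
    (hα : α ∈ invariantTwists k e)
    (hcomponent : ∀ J, ∀ n : ℤ, n < 0 ∨ n = 1 → component J (fun _ => 2) n α = 0) :
    Admissible D Finset.univ α := by
  have hhom := isHomogeneousOn_univ_of_mem_invariantTwists hα
  obtain ⟨Q, hQ, rfl⟩ := mem_invariantTwists.1 hα
  exact ⟨mem_Phi_iff.2 ⟨Q, e, rfl⟩, dependsOnlyOn_univ _, (sum_regular_eq_zero_iff hD).2 hQ.2,
    hhom, fun J _ => hcomponent J⟩

lemma component_two (J : Finset (Fin l)) (n : ℤ) (α : RF k l) :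
    component J (fun _ => 2) n α = (laurentExpansion J α).coeff (n - 2 * J.card) := by
  rw [component_eq_coeff, Finset.sum_const, nsmul_eq_mul, mul_comm]

lemma le_ordAlong_iff_component {n : ℤ} :
    ((n - 2 * J.card : ℤ) : WithTop ℤ) ≤ ordAlong J α ↔
      ∀ m < n, component J (fun _ => 2) m α = 0 := by
  simp only [le_ordAlong_iff, component_two]
  refine ⟨fun h m hm => h _ (by lia), fun h m hm => ?_⟩
  simpa using h (m + 2 * J.card) (by lia)

lemma neg_four_le_ordAlong_pair (hα : Admissible D Finset.univ α) {p : Fin l × Fin l}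
    (hp : p ∈ orderedPairs l) : ((-4 : ℤ) : WithTop ℤ) ≤ ordAlong {p.1, p.2} α := by
  have hord := le_ordAlong_iff_component.2 fun m hm =>
    hα.2.2.2.2 {p.1, p.2} (Finset.subset_univ _) m (.inl hm)
  rwa [Finset.card_pair (mem_orderedPairs.1 hp).ne] at hord

lemma admissible_iff [CharZero k] (hD : IsPartialDeriv D) :
    Admissible D Finset.univ α ↔ α ∈ invariantTwists k (fun _ : Fin l × Fin l => -4) ∧
      ∀ J, ∀ n : ℤ, n < 0 ∨ n = 1 → component J (fun _ => 2) n α = 0 := by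
  exact ⟨fun hα => ⟨mem_invariantTwists_of_admissible hD hα fun _ => neg_four_le_ordAlong_pair hα,
    fun J => hα.2.2.2.2 J (Finset.subset_univ J)⟩,
    fun h => admissible_of_mem_invariantTwists hD h.1 h.2⟩

end Twists

section Duality

variable {k : Type} [Field k] {l : ℕ}
  {D : Fin l → Derivation k (RF k l) (RF k l)} {α : RF k l} {e : Fin l × Fin l → ℤ}
  {J : Finset (Fin l)}

lemma innerSum_le_ordAlong (hα : α ∈ invariantTwists k e) (J : Finset (Fin l)) :
    ((innerSum e J : ℤ) : WithTop ℤ) ≤ ordAlong J α := by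
  obtain ⟨Q, -, rfl⟩ := mem_invariantTwists.1 hα
  rw [le_ordAlong_mul_diffProd_iff, sub_self, le_ordAlong_algebraMap_iff]
  exact fun m _ => Finset.sum_nonneg fun i _ => Int.natCast_nonneg _

/-- The total degree of an `sl₂`-invariant is half the sum of the weights, and its degree in the
variables outside `J` is at most their total weight. -/
lemma innerSum_compl_le_ordAlong [CharZero k] (hα : α ∈ invariantTwists k e)
    (J : Finset (Fin l)) :
    ((innerSum e Jᶜ + 2 * Jᶜ.card - 2 * J.card : ℤ) : WithTop ℤ) ≤ ordAlong J α := by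
  obtain ⟨Q, hQ, rfl⟩ := mem_invariantTwists.1 hα
  rw [le_ordAlong_mul_diffProd_iff, le_ordAlong_algebraMap_iff]
  intro m hm
  have hdegree := two_mul_degree_eq hQ hm
  have hle : ∑ i ∈ Jᶜ, (m i : ℤ) ≤ ∑ i ∈ Jᶜ, twistWeight e i :=
    Finset.sum_le_sum fun i _ => apply_le_of_mem_support hQ hm i
  have hincident := sum_incidentSum_sub_sum_compl e J
  rw [← Finset.sum_add_sum_compl J, ← Finset.sum_add_sum_compl J] at hdegree
  simp only [twistWeight, Finset.sum_sub_distrib, Finset.sum_const, nsmul_eq_mul] at hdegree hle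
  linarith

lemma laurentExpansion_empty (α : RF k l) : laurentExpansion ∅ α = HahnSeries.single 0 α := by
  have hC : laurentExpansion ∅ = (HahnSeries.C : RF k l →+* LaurentSeries (RF k l)) := by
    refine IsLocalization.ringHom_ext (nonZeroDivisors (MvPolynomial (Fin l) k)) ?_
    refine MvPolynomial.ringHom_ext (fun c => ?_) fun i => ?_
    · exact (congrArg _ (algebraMap_C c)).trans
        ((laurentExpansion_algebraMap_field ∅ c).trans (congrArg _ (algebraMap_C c).symm))
    · exact laurentExpansion_zv ∅ i
  exact congrArg (· α) hC

lemma component_two_of_isHomogeneousOn (hα : IsHomogeneousOn J (-(2 * (J.card : ℤ))) α) (n : ℤ) :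
    component J (fun _ => 2) n α = if n = 0 then α else 0 := by
  rw [component_two, isHomogeneousOn_iff.1 hα, HahnSeries.coeff_single]
  simp [sub_eq_neg_self]

lemma exists_orderedPair_eq_of_card_eq_two (hJ : J.card = 2) :
    ∃ p ∈ orderedPairs l, J = {p.1, p.2} := by
  obtain ⟨a, b, hab, rfl⟩ := Finset.card_eq_two.1 hJ
  rcases hab.lt_or_gt with h | h
  · exact ⟨(a, b), mem_orderedPairs.2 h, rfl⟩
  · exact ⟨(b, a), mem_orderedPairs.2 h, Finset.pair_comm a b⟩

lemma innerSum_eq_zero_of_card_eq_one (hJ : J.card = 1) : innerSum e J = 0 := by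
  obtain ⟨a, rfl⟩ := Finset.card_eq_one.1 hJ
  refine Finset.sum_eq_zero fun p hp => ?_
  simp only [Finset.mem_filter, mem_orderedPairs, Finset.mem_singleton] at hp
  lia

lemma innerSum_neg_two (hJ : J.card = 1 ∨ J.card = 2) :
    innerSum (fun _ => -2) J = 2 - 2 * (J.card : ℤ) := by
  rcases hJ with hJ | hJ
  · rw [innerSum_eq_zero_of_card_eq_one hJ, hJ]
    norm_num
  · obtain ⟨p, hp, rfl⟩ := exists_orderedPair_eq_of_card_eq_two hJ
    rw [innerSum_pair _ hp, hJ]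
    norm_num

lemma two_sub_le_ordAlong [CharZero k] (hl : l ≤ 5) (hα : α ∈ invariantTwists k (fun _ => -2))
    (hJ : J ≠ ∅) (hJ' : J ≠ Finset.univ) :
    ((2 - 2 * J.card : ℤ) : WithTop ℤ) ≤ ordAlong J α := by
  have hcard := J.card_add_card_compl
  have hpos := Finset.card_pos.2 (Finset.nonempty_iff_ne_empty.2 hJ)
  have hpos' := Finset.card_pos.2
    (Finset.nonempty_iff_ne_empty.2 (J.compl_eq_empty_iff.not.2 hJ'))
  rw [Fintype.card_fin] at hcard
  rcases le_or_gt J.card 2 with h | h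
  · exact innerSum_neg_two (J := J) (by lia) ▸ innerSum_le_ordAlong hα J
  · have := innerSum_compl_le_ordAlong hα J
    rwa [innerSum_neg_two (by lia), sub_add_cancel] at this

lemma admissibleInd_iff [CharZero k] (hD : IsPartialDeriv D) (hl : 3 ≤ l) (hl' : l ≤ 5) :
    AdmissibleInd D Finset.univ α ↔ α ∈ invariantTwists k (fun _ : Fin l × Fin l => -2) := by
  constructor
  · rintro ⟨hα, hind⟩
    refine mem_invariantTwists_of_admissible hD hα fun p hp => ?_
    have hcard := Finset.card_pair (mem_orderedPairs.1 hp).ne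
    have hne : ({p.1, p.2} : Finset (Fin l)) ≠ Finset.univ := fun h => by
      rw [h, Finset.card_fin] at hcard
      lia
    have hord := (le_ordAlong_iff_component (J := {p.1, p.2}) (n := 2) (α := α)).2 fun m hm => by
      obtain rfl | hm : m = 0 ∨ (m < 0 ∨ m = 1) := by lia
      · exact hind _ (Finset.subset_univ _) (Finset.insert_ne_empty _ _) hne
      · exact hα.2.2.2.2 _ (Finset.subset_univ _) m hm
    rwa [hcard] at hord
  · intro hα
    have hproper {J : Finset (Fin l)} (hJ : J ≠ ∅) (hJ' : J ≠ Finset.univ) :=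
      le_ordAlong_iff_component.1 (two_sub_le_ordAlong hl' hα hJ hJ')
    refine ⟨admissible_of_mem_invariantTwists hD hα fun J n hn => ?_,
      fun J _ hJ hJ' => hproper hJ hJ' 0 two_pos⟩
    by_cases hJ : J = ∅
    · rw [component_two_of_isHomogeneousOn (isHomogeneousOn_iff.2 ?_), if_neg (by lia)]
      simp [hJ, laurentExpansion_empty]
    by_cases hJ' : J = Finset.univ
    · rw [component_two_of_isHomogeneousOn, if_neg (by lia)]
      rw [hJ']
      exact isHomogeneousOn_univ_of_mem_invariantTwists hα
    · exact hproper hJ hJ' n (by lia)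

end Duality

section Spaces

variable {k : Type} [Field k] {l : ℕ}

/-- The component `(α)_n` for the weights `2`, as a linear map in `α`. -/
def componentMap (k : Type) [Field k] (J : Finset (Fin l)) (n : ℤ) : RF k l →ₗ[k] RF k l where
  toFun := component J (fun _ => 2) n
  map_add' α β := by simp only [component_two, map_add, HahnSeries.coeff_add]
  map_smul' c α := by
    rw [component_two, component_two, laurentExpansion_smul, HahnSeries.coeff_smul,
      algebraMap_smul, RingHom.id_apply]

lemma componentMap_apply (J : Finset (Fin l)) (n : ℤ) (α : RF k l) :
    componentMap k J n α = component J (fun _ => 2) n α :=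
  rfl

/-- The space `R^l`. -/
def admissibleSpace (k : Type) [Field k] (l : ℕ) : Submodule k (RF k l) :=
  invariantTwists k (fun _ : Fin l × Fin l => -4) ⊓
    ⨅ (J) (n : ℤ) (_ : n < 0 ∨ n = 1), LinearMap.ker (componentMap k J n)

variable [CharZero k] {D : Fin l → Derivation k (RF k l) (RF k l)} {α : RF k l}

lemma mem_admissibleSpace (hD : IsPartialDeriv D) :
    α ∈ admissibleSpace k l ↔ Admissible D Finset.univ α := by
  simp [admissibleSpace, admissible_iff hD, componentMap_apply, Submodule.mem_iInf]

lemma span_setOf_admissible (hD : IsPartialDeriv D) :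
    Submodule.span k {α | Admissible D Finset.univ α} = admissibleSpace k l := by
  simp only [← mem_admissibleSpace hD]
  exact Submodule.span_eq (admissibleSpace k l)

lemma span_setOf_admissibleInd (hD : IsPartialDeriv D) (hl : 3 ≤ l) (hl' : l ≤ 5) :
    Submodule.span k {α | AdmissibleInd D Finset.univ α} =
      invariantTwists k (fun _ : Fin l × Fin l => -2) := by
  simp only [admissibleInd_iff hD hl hl']
  exact Submodule.span_eq (invariantTwists k fun _ : Fin l × Fin l => -2)

end Spaces

section Rigidity

variable {k : Type} [Field k] {l : ℕ}
  {D : Fin l → Derivation k (RF k l) (RF k l)}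

/-- The derivation of a field of Laurent series obtained by applying a derivation to each
coefficient, as an additive map. -/
def coeffwise {L : Type} [Field L] [Algebra k L] (V : Derivation k L L) :
    LaurentSeries L →+ LaurentSeries L :=
  AddMonoidHom.mk' (fun x => x.map V) fun x y => by ext; simp

lemma coeff_coeffwise {L : Type} [Field L] [Algebra k L] (V : Derivation k L L)
    (x : LaurentSeries L) (n : ℤ) : (coeffwise V x).coeff n = V (x.coeff n) :=
  rfl

lemma coeffwise_single {L : Type} [Field L] [Algebra k L] (V : Derivation k L L) (n : ℤ) (a : L) :
    coeffwise V (HahnSeries.single n a) = HahnSeries.single n (V a) :=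
  HahnSeries.map_single (V : ZeroHom L L)

lemma coeffwise_mul {L : Type} [Field L] [Algebra k L] (V : Derivation k L L)
    (x y : LaurentSeries L) : coeffwise V (x * y) = coeffwise V x * y + x * coeffwise V y := by
  ext n
  have hsupport (z : LaurentSeries L) : (coeffwise V z).support ⊆ z.support :=
    z.support_map_subset (V : ZeroHom L L)
  rw [HahnSeries.coeff_add, coeff_coeffwise,
    HahnSeries.coeff_mul_left' x.isPWO_support (hsupport x),
    HahnSeries.coeff_mul_right' y.isPWO_support (hsupport y),
    HahnSeries.coeff_mul, map_sum, ← Finset.sum_add_distrib]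
  refine Finset.sum_congr rfl fun p _ => ?_
  rw [Derivation.leibniz, coeff_coeffwise, coeff_coeffwise, smul_eq_mul, smul_eq_mul]
  ring

lemma coeffwise_laurentExpansion (hD : IsPartialDeriv D) (J : Finset (Fin l)) (i : Fin l)
    (α : RF k l) :
    coeffwise (D i) (laurentExpansion J α) =
      HahnSeries.single (if i ∈ J then 1 else 0) 1 * laurentExpansion J (D i α) := by
  have hα : dependsOnlyOn Finset.univ α := dependsOnlyOn_univ α
  induction hα using Subfield.closure_induction with
  | mem x hx =>
    obtain ⟨c, rfl⟩ | ⟨j, -, rfl⟩ := hx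
    · rw [laurentExpansion_algebraMap_field, coeffwise_single, (D i).map_algebraMap]
      simp
    · rw [laurentExpansion_zv, coeffwise_single, hD i j]
      by_cases h : j = i <;> simp [h]
  | one => rw [map_one, ← HahnSeries.single_zero_one, coeffwise_single]; simp
  | add x y _ _ hx hy => simp only [map_add, hx, hy, mul_add]
  | neg x _ hx =>
    rw [map_neg, map_neg, map_neg, map_neg, hx]
    exact (mul_neg _ _).symm
  | inv x _ hx =>
    by_cases hx₀ : x = 0
    · simp [hx₀]
    have hLx : laurentExpansion J x ≠ 0 := (map_ne_zero _).2 hx₀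
    have hmul := coeffwise_mul (D i) (laurentExpansion J x) (laurentExpansion J x)⁻¹
    rw [mul_inv_cancel₀ hLx, ← HahnSeries.single_zero_one, coeffwise_single,
      Derivation.map_one_eq_zero, map_zero, hx] at hmul
    rw [Derivation.leibniz_inv, smul_eq_mul, map_mul, map_neg, map_pow, map_inv₀]
    refine mul_left_cancel₀ hLx ?_
    rw [← neg_eq_of_add_eq_zero_right hmul.symm]
    field_simp
  | mul x y _ _ hx hy =>
    simp only [map_mul, coeffwise_mul, Derivation.leibniz, hx, hy, smul_eq_mul, map_add]
    ring

lemma coeff_laurentExpansion_mul_derivation (hD : IsPartialDeriv D) (J : Finset (Fin l)) (r : ℕ)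
    (i : Fin l) (α : RF k l) (m : ℤ) :
    (laurentExpansion J (zv i ^ r * D i α)).coeff m = zv i ^ r *
      D i ((laurentExpansion J α).coeff (if i ∈ J then m + 1 - r else m)) := by
  have hpow : laurentExpansion J (zv i ^ r : RF k l) =
      HahnSeries.single (if i ∈ J then (r : ℤ) else 0) (zv i ^ r) := by
    rw [map_pow, laurentExpansion_zv, HahnSeries.single_pow]
    simp
  have hcoeff (n : ℤ) := congrArg (HahnSeries.coeff · (n + if i ∈ J then 1 else 0))
    (coeffwise_laurentExpansion hD J i α)
  simp only [coeff_coeffwise, HahnSeries.coeff_single_mul, one_mul, add_sub_cancel_right] at hcoeff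
  rw [map_mul, hpow, HahnSeries.coeff_single_mul, ← hcoeff]
  split_ifs <;> ring_nf

lemma coeff_laurentExpansion_powerField (hD : IsPartialDeriv D) (J : Finset (Fin l)) (r : ℕ)
    (α : RF k l) (m : ℤ) :
    (laurentExpansion J (powerField D Finset.univ r α)).coeff m =
      powerField D J r ((laurentExpansion J α).coeff (m + 1 - r)) +
        powerField D Jᶜ r ((laurentExpansion J α).coeff m) := by
  simp only [powerField_apply, map_sum, HahnSeries.coeff_sum,
    coeff_laurentExpansion_mul_derivation hD]
  rw [← Finset.sum_add_sum_compl J]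
  congr 1
  · exact Finset.sum_congr rfl fun i hi => by rw [if_pos hi]
  · exact Finset.sum_congr rfl fun i hi => by rw [if_neg (Finset.mem_compl.1 hi)]

lemma powerField_coeff_zero_eq_zero (hD : IsPartialDeriv D) {J : Finset (Fin l)} {w : RF k l}
    (h₀ : powerField D Finset.univ 0 w = 0) (h₂ : powerField D Finset.univ 2 w = 0)
    (hcoeff : ∀ m : ℤ, m < 0 ∨ m = 1 → (laurentExpansion J w).coeff m = 0)
    {S : Finset (Fin l)} (hS : S = J ∨ S = Jᶜ) {r : ℕ} (hr : r = 0 ∨ r = 2) :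
    powerField D S r ((laurentExpansion J w).coeff 0) = 0 := by
  have hzero (r : ℕ) (hw : powerField D Finset.univ r w = 0) (m : ℤ) :
      powerField D J r ((laurentExpansion J w).coeff (m + 1 - r)) +
        powerField D Jᶜ r ((laurentExpansion J w).coeff m) = 0 := by
    rw [← coeff_laurentExpansion_powerField hD, hw, map_zero, HahnSeries.coeff_zero]
  have h₁ := hcoeff 1 (Or.inr rfl)
  have hneg := hcoeff (-1) (Or.inl (by norm_num))
  rcases hr with rfl | rfl
  · have hJ := hzero 0 h₀ (-1)
    have hJc := hzero 0 h₀ 0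
    simp only [hneg, h₁, map_zero, add_zero, zero_add, Nat.cast_zero, sub_zero,
      neg_add_cancel] at hJ hJc
    rcases hS with rfl | rfl <;> assumption
  · have hJ := hzero 2 h₂ 1
    have hJc := hzero 2 h₂ 0
    norm_num [hneg, h₁] at hJ hJc
    rcases hS with rfl | rfl <;> assumption

lemma lie_powerField (hD : IsPartialDeriv D) (S : Finset (Fin l)) :
    ⁅powerField D S 0, powerField D S 2⁆ = 2 • powerField D S 1 := by
  refine derivation_RF_ext fun i => ?_
  rw [Derivation.commutator_apply, Derivation.smul_apply]
  by_cases hi : i ∈ S <;>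
    simp [powerField_zv hD, hi, Derivation.leibniz_pow]

lemma powerField_one_eq_zero [CharZero k] (hD : IsPartialDeriv D) {S : Finset (Fin l)} {α : RF k l}
    (h₀ : powerField D S 0 α = 0) (h₂ : powerField D S 2 α = 0) : powerField D S 1 α = 0 := by
  have h := DFunLike.congr_fun (lie_powerField hD S) α
  rw [Derivation.commutator_apply, h₀, h₂, map_zero, map_zero, sub_zero, Derivation.smul_apply,
    two_nsmul] at h
  exact self_eq_neg.1 (eq_neg_of_add_eq_zero_left h.symm)

lemma eq_zero_of_sum_pow_mul_eq_zero {L ι : Type} [Field L] {S : Finset ι} {v x : ι → L}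
    (hv : Set.InjOn v S) (h : ∀ r < S.card, ∑ i ∈ S, v i ^ r * x i = 0) {i : ι} (hi : i ∈ S) :
    x i = 0 := by
  have hinj : Function.Injective fun j => v (S.equivFin.symm j) := fun a b hab =>
    S.equivFin.symm.injective (Subtype.ext (hv (S.equivFin.symm a).2 (S.equivFin.symm b).2 hab))
  have hzero := Matrix.eq_zero_of_forall_pow_sum_mul_pow_eq_zero
    (v := fun j => x (S.equivFin.symm j)) hinj fun r => by
      rw [S.equivFin.symm.sum_comp fun j : S => x j * v j ^ (r : ℕ),
        S.sum_coe_sort fun j => x j * v j ^ (r : ℕ), ← h r r.2]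
      exact Finset.sum_congr rfl fun j _ => mul_comm _ _
  simpa using congrFun hzero (S.equivFin ⟨i, hi⟩)

lemma pderiv_eq_zero_of_dvd {σ : Type*} {i : σ} {q : MvPolynomial σ k} (h : q ∣ pderiv i q) :
    pderiv i q = 0 := by
  by_contra hne
  have hsupport : (X i * pderiv i q).support ⊆ q.support := fun m hm => by
    rw [mem_support_iff, coeff_X_mul_pderiv] at hm
    exact mem_support_iff.2 (right_ne_zero_of_mul hm)
  have hdegree := totalDegree_le_of_support_subset hsupport
  rw [totalDegree_mul_of_isDomain (X_ne_zero i) hne, totalDegree_X] at hdegree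
  have hle := totalDegree_le_of_dvd_of_isDomain h hne
  lia

lemma eq_C_of_pderiv_eq_zero [CharZero k] {σ : Type*} {p : MvPolynomial σ k}
    (h : ∀ i, pderiv i p = 0) : p = C (coeff 0 p) := by
  ext m
  rw [coeff_C]
  split_ifs with hm
  · rw [hm]
  obtain ⟨i, hi⟩ := Finsupp.ne_iff.1 (Ne.symm hm)
  have hcoeff := coeff_X_mul_pderiv i m p
  rw [h i, mul_zero, coeff_zero] at hcoeff
  exact (mul_eq_zero.1 hcoeff.symm).resolve_left (Nat.cast_ne_zero.2 hi)

lemma derivation_algebraMap_eq_pderiv (hD : IsPartialDeriv D) (i : Fin l)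
    (p : MvPolynomial (Fin l) k) : D i (algebraMap _ _ p) = algebraMap _ _ (pderiv i p) :=
  derivation_algebraMap (fun j => by rw [hD, pderiv_X, Pi.single_apply]; simp) p

/-- In lowest terms `p / q`, the quotient rule makes `q` divide each of its derivatives. -/
lemma mem_range_of_derivation_eq_zero [CharZero k] (hD : IsPartialDeriv D) {α : RF k l}
    (h : ∀ i, D i α = 0) : α ∈ Set.range (algebraMap k (RF k l)) := by
  obtain ⟨p, q, hpq, rfl⟩ := IsFractionRing.exists_reduced_fraction (MvPolynomial (Fin l) k) α
  have hq : (q : MvPolynomial (Fin l) k) ≠ 0 := nonZeroDivisors.coe_ne_zero q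
  have hmk : algebraMap _ (RF k l) p =
      IsLocalization.mk' (RF k l) p q * algebraMap _ (RF k l) (q : MvPolynomial (Fin l) k) :=
    (IsLocalization.mk'_spec _ p q).symm
  have hquot (i : Fin l) : (q : MvPolynomial (Fin l) k) * pderiv i p = p * pderiv i q.1 := by
    have hDp := congrArg (D i) hmk
    rw [Derivation.leibniz, h i, smul_zero, add_zero, derivation_algebraMap_eq_pderiv hD,
      derivation_algebraMap_eq_pderiv hD, smul_eq_mul] at hDp
    apply IsFractionRing.injective (MvPolynomial (Fin l) k) (RF k l)
    rw [map_mul, map_mul, hDp, hmk]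
    ring
  have hq' (i : Fin l) : pderiv i (q : MvPolynomial (Fin l) k) = 0 :=
    pderiv_eq_zero_of_dvd (hpq.symm.dvd_of_dvd_mul_left (Dvd.intro _ (hquot i)))
  have hp' (i : Fin l) : pderiv i p = 0 := by
    simpa [hq' i, hq] using hquot i
  refine ⟨coeff 0 p / coeff 0 (q : MvPolynomial (Fin l) k), ?_⟩
  rw [map_div₀, ← algebraMap_C, ← algebraMap_C, ← eq_C_of_pderiv_eq_zero hp',
    ← eq_C_of_pderiv_eq_zero hq', IsFractionRing.mk'_eq_div]

lemma eq_zero_of_powerField_eq_zero {S : Finset (Fin l)} {α : RF k l}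
    (h : ∀ r < S.card, powerField D S r α = 0) {i : Fin l} (hi : i ∈ S) : D i α = 0 := by
  refine eq_zero_of_sum_pow_mul_eq_zero (v := zv) (x := fun i => D i α) (fun a _ b _ hab => ?_)
    (fun r hr => powerField_apply (D := D) S r α ▸ h r hr) hi
  exact X_injective (IsFractionRing.injective _ (RF k l) hab)

lemma coeff_zero_mem_range [CharZero k] (hD : IsPartialDeriv D) {J : Finset (Fin l)} {w : RF k l}
    (h₀ : powerField D Finset.univ 0 w = 0) (h₂ : powerField D Finset.univ 2 w = 0)
    (hcoeff : ∀ m : ℤ, m < 0 ∨ m = 1 → (laurentExpansion J w).coeff m = 0)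
    (hJ : J.card ≤ 3) (hJc : Jᶜ.card ≤ 3) :
    (laurentExpansion J w).coeff 0 ∈ Set.range (algebraMap k (RF k l)) := by
  have hfield {S : Finset (Fin l)} (hS : S = J ∨ S = Jᶜ) (r : ℕ) (hr : r < S.card) :
      powerField D S r ((laurentExpansion J w).coeff 0) = 0 := by
    have hr₀₂ {r : ℕ} := powerField_coeff_zero_eq_zero hD h₀ h₂ hcoeff hS (r := r)
    obtain rfl | rfl | rfl : r = 0 ∨ r = 1 ∨ r = 2 := by
      rcases hS with rfl | rfl <;> lia
    · exact hr₀₂ (Or.inl rfl)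
    · exact powerField_one_eq_zero hD (hr₀₂ (Or.inl rfl)) (hr₀₂ (Or.inr rfl))
    · exact hr₀₂ (Or.inr rfl)
  refine mem_range_of_derivation_eq_zero hD fun i => ?_
  by_cases hi : i ∈ J
  · exact eq_zero_of_powerField_eq_zero (hfield (Or.inl rfl)) hi
  · exact eq_zero_of_powerField_eq_zero (hfield (Or.inr rfl)) (Finset.mem_compl.2 hi)

lemma powerField_two_div_eq_zero (hD : IsPartialDeriv D) {α : RF k l}
    (hα : ∑ i, (zv i ^ 2 * D i α + 4 * zv i * α) = 0) {e : Fin l × Fin l → ℤ}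
    (he : ∀ i, incidentSum e i = -4) : powerField D Finset.univ 2 (α / diffProd k e) = 0 := by
  have hform : linForm k (fun _ : Fin l => 4) = -linForm k (incidentSum e) := by
    rw [eq_neg_iff_add_eq_zero, ← linForm_add]
    simp [linForm, he]
  rw [sum_regular_eq_powerField, hform, map_neg] at hα
  rw [Derivation.leibniz_div, powerField_univ_two_diffProd hD, smul_eq_mul, smul_eq_mul,
    smul_eq_mul]
  linear_combination (diffProd k e)⁻¹ ^ 2 * diffProd k e * hα

lemma powerField_zero_div_eq_zero (hD : IsPartialDeriv D) {α : RF k l}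
    (hα : powerField D Finset.univ 0 α = 0) (e : Fin l × Fin l → ℤ) :
    powerField D Finset.univ 0 (α / diffProd k e) = 0 := by
  rw [Derivation.leibniz_div, hα, powerField_univ_zero_diffProd hD, smul_zero, smul_zero,
    sub_zero, smul_zero]

/-- Dividing by `diffProd k e` turns `α` into a function `w` killed by `sl₂`. As the coefficients
of degree `-1` and `1` of `w` vanish, its constant coefficient is killed by the two copies of
`sl₂` acting on `J` and on its complement; each involves at most three variables, so this
coefficient is a constant. -/
lemma component_zero_mem_span [CharZero k] (hD : IsPartialDeriv D) {α : RF k l}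
    (hα : Admissible D Finset.univ α) {e : Fin l × Fin l → ℤ} {J : Finset (Fin l)}
    (he : ∀ i, incidentSum e i = -4) (hsplit : IsSplitBy e J)
    (hinner : innerSum e J = -(2 * (J.card : ℤ))) (hJ : J.card ≤ 3) (hJc : Jᶜ.card ≤ 3) :
    component J (fun _ => 2) 0 α ∈ k ∙ diffProd k e := by
  set w := α / diffProd k e
  have hαw : α = w * diffProd k e := (div_mul_cancel₀ _ (diffProd_ne_zero e)).symm
  have hcomponent (n : ℤ) : component J (fun _ => 2) n α =
      (laurentExpansion J w).coeff n * diffProd k e := by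
    rw [component_two, hαw, map_mul, laurentExpansion_diffProd hsplit,
      HahnSeries.coeff_mul_single, hinner]
    ring_nf
  have hcoeff (m : ℤ) (hm : m < 0 ∨ m = 1) : (laurentExpansion J w).coeff m = 0 := by
    have hzero := hα.2.2.2.2 J (Finset.subset_univ J) m hm
    rw [hcomponent] at hzero
    exact (mul_eq_zero.1 hzero).resolve_right (diffProd_ne_zero e)
  obtain ⟨c, hc⟩ := coeff_zero_mem_range hD
    (powerField_zero_div_eq_zero hD (powerField_univ_zero_of_admissible hD hα) e)
    (powerField_two_div_eq_zero hD hα.2.2.1 he) hcoeff hJ hJc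
  rw [hcomponent, ← hc, ← Algebra.smul_def]
  exact Submodule.smul_mem _ c (Submodule.mem_span_singleton_self _)

end Rigidity

section Decomposables

variable {k : Type} [Field k] {l : ℕ}

/-- The exponents of the product of the functions `(x - y)⁻⁴` and `(x - y)⁻²(y - z)⁻²(x - z)⁻²`
spanning `R²` and `R³`, in the variables of `K` and those of its complement; meaningful when each
of these two blocks has two or three elements. -/
def blockExp (K : Finset (Fin l)) (p : Fin l × Fin l) : ℤ :=
  if p.1 ∈ K ∧ p.2 ∈ K then -4 / (K.card - 1)
  else if p.1 ∉ K ∧ p.2 ∉ K then -4 / (Kᶜ.card - 1)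
  else 0

variable {K J : Finset (Fin l)}

lemma incidentSum_blockExp (hl : l = 4 ∨ l = 5) (hK : K.card = 2) (i : Fin l) :
    incidentSum (blockExp K) i = -4 := by
  revert K i
  rcases hl with rfl | rfl <;> decide +kernel

lemma isSplitBy_blockExp (hJ : J ∈ ({∅, K, Kᶜ, Finset.univ} : Finset (Finset (Fin l)))) :
    IsSplitBy (blockExp K) J := by
  intro p _ hp
  simp only [Finset.mem_insert, Finset.mem_singleton] at hJ
  rcases hJ with hJ | hJ | hJ | hJ <;>
    simp only [hJ, blockExp, Finset.mem_compl, Finset.notMem_empty, Finset.mem_univ] at hp ⊢ <;>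
    grind

lemma innerSum_blockExp (hl : l = 4 ∨ l = 5) (hK : K.card = 2)
    (hJ : J ∈ ({∅, K, Kᶜ, Finset.univ} : Finset (Finset (Fin l)))) :
    innerSum (blockExp K) J = -(2 * (J.card : ℤ)) := by
  revert K J
  rcases hl with rfl | rfl <;> decide +kernel

lemma le_innerSum_blockExp (hl : l = 4 ∨ l = 5) (hK : K.card = 2)
    (hJ : J ∉ ({∅, K, Kᶜ, Finset.univ} : Finset (Finset (Fin l)))) :
    2 - 2 * (J.card : ℤ) ≤ innerSum (blockExp K) J := by
  revert K J
  rcases hl with rfl | rfl <;> decide +kernel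

lemma component_diffProd_blockExp (hl : l = 4 ∨ l = 5) (hK : K.card = 2)
    (hJ : J ∈ ({∅, K, Kᶜ, Finset.univ} : Finset (Finset (Fin l)))) (n : ℤ) :
    component J (fun _ => 2) n (diffProd k (blockExp K)) =
      if n = 0 then diffProd k (blockExp K) else 0 := by
  refine component_two_of_isHomogeneousOn (isHomogeneousOn_iff.2 ?_) n
  rw [laurentExpansion_diffProd (isSplitBy_blockExp hJ), innerSum_blockExp hl hK hJ]

lemma component_diffProd_blockExp_eq_zero (hl : l = 4 ∨ l = 5) (hK : K.card = 2)
    (hJ : J ∉ ({∅, K, Kᶜ, Finset.univ} : Finset (Finset (Fin l)))) {n : ℤ} (hn : n < 2) :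
    component J (fun _ => 2) n (diffProd k (blockExp K)) = 0 := by
  refine le_ordAlong_iff_component.1 ?_ n hn
  rw [ordAlong_diffProd]
  exact_mod_cast le_innerSum_blockExp hl hK hJ

lemma admissible_diffProd_blockExp [CharZero k] {D : Fin l → Derivation k (RF k l) (RF k l)}
    (hD : IsPartialDeriv D) (hl : l = 4 ∨ l = 5) (hK : K.card = 2) :
    Admissible D Finset.univ (diffProd k (blockExp K)) := by
  have hweight : twistWeight (blockExp K) = 0 := by
    ext i
    rw [twistWeight, incidentSum_blockExp hl hK]
    rfl
  have hone : (1 : MvPolynomial (Fin l) k) ∈ sl2Invariants k (twistWeight (blockExp K)) := by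
    rw [hweight, sl2Invariants_zero]
    exact Submodule.mem_span_singleton_self 1
  refine admissible_of_mem_invariantTwists hD (mem_invariantTwists.2 ⟨1, hone, by simp⟩)
    fun J n hn => ?_
  by_cases hJ : J ∈ ({∅, K, Kᶜ, Finset.univ} : Finset (Finset (Fin l)))
  · rw [component_diffProd_blockExp hl hK hJ, if_neg (by lia)]
  · exact component_diffProd_blockExp_eq_zero hl hK hJ (by lia)

/-- A set of pairs of indices containing one block of each partition of the indices with a block
of two elements. -/
structure IsPairSystem (𝒥 : Finset (Finset (Fin l))) : Prop where
  card_eq_two : ∀ J ∈ 𝒥, J.card = 2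
  mem_or_compl_mem : ∀ J, J.card = 2 → J ∈ 𝒥 ∨ Jᶜ ∈ 𝒥
  compl_notMem : ∀ J ∈ 𝒥, Jᶜ ∉ 𝒥

lemma isPairSystem_four :
    IsPairSystem ({J | J.card = 2 ∧ 0 ∈ J} : Finset (Finset (Fin 4))) := by
  constructor <;> decide +kernel

lemma isPairSystem_five : IsPairSystem ({J | J.card = 2} : Finset (Finset (Fin 5))) := by
  constructor <;> decide +kernel

variable {𝒥 : Finset (Finset (Fin l))} {D : Fin l → Derivation k (RF k l) (RF k l)} {α : RF k l}

lemma component_zero_diffProd_blockExp (hl : l = 4 ∨ l = 5) (h𝒥 : IsPairSystem 𝒥)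
    (hK : K ∈ 𝒥) (hJ : J ∈ 𝒥) :
    component J (fun _ => 2) 0 (diffProd k (blockExp K)) =
      if J = K then diffProd k (blockExp K) else 0 := by
  have hcard := h𝒥.card_eq_two K hK
  split_ifs with hJK
  · rw [component_diffProd_blockExp hl hcard (by simp [hJK]), if_pos rfl]
  · refine component_diffProd_blockExp_eq_zero hl hcard ?_ two_pos
    have hcardJ := h𝒥.card_eq_two J hJ
    have hcompl : J ≠ Kᶜ := fun h => h𝒥.compl_notMem K hK (h ▸ hJ)
    have huniv : J ≠ Finset.univ := fun h => by
      rw [h, Finset.card_fin] at hcardJ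
      lia
    have hempty : J ≠ ∅ := fun h => by simp [h] at hcardJ
    simp [hJK, hcompl, huniv, hempty]

/-- At the pairs of `𝒥` the pole has order at most two by assumption, at their complements it has
by duality. -/
lemma mem_invariantTwists_of_component_eq_zero [CharZero k] (hD : IsPartialDeriv D)
    (h𝒥 : IsPairSystem 𝒥) (hα : Admissible D Finset.univ α)
    (hcomponent : ∀ J ∈ 𝒥, component J (fun _ => 2) 0 α = 0) :
    α ∈ invariantTwists k (fun _ : Fin l × Fin l => -2) := by
  have hord {J : Finset (Fin l)} (hJ : J ∈ 𝒥) : ((-2 : ℤ) : WithTop ℤ) ≤ ordAlong J α := by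
    have h := (le_ordAlong_iff_component (J := J) (n := 2) (α := α)).2 fun m hm => by
      obtain rfl | hm : m = 0 ∨ (m < 0 ∨ m = 1) := by lia
      · exact hcomponent J hJ
      · exact hα.2.2.2.2 J (Finset.subset_univ J) m hm
    rwa [h𝒥.card_eq_two J hJ] at h
  set e : Fin l × Fin l → ℤ := fun p => if {p.1, p.2} ∈ 𝒥 then -2 else -4 with he
  have hαe : α ∈ invariantTwists k e := by
    refine mem_invariantTwists_of_admissible hD hα fun p hp => ?_
    by_cases hmem : {p.1, p.2} ∈ 𝒥
    · rw [he]
      simpa only [if_pos hmem] using hord hmem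
    · rw [he]
      simpa only [if_neg hmem] using neg_four_le_ordAlong_pair hα hp
  refine mem_invariantTwists_of_admissible hD hα fun p hp => ?_
  have hcard := Finset.card_pair (mem_orderedPairs.1 hp).ne
  rcases h𝒥.mem_or_compl_mem _ hcard with hmem | hmem
  · exact hord hmem
  · have hcardc := h𝒥.card_eq_two _ hmem
    have hdual := innerSum_compl_le_ordAlong hαe {p.1, p.2}
    obtain ⟨q, hq, hqc⟩ := exists_orderedPair_eq_of_card_eq_two hcardc
    rw [hqc] at hdual hcardc hmem
    have heq : e q = -2 := if_pos hmem
    rwa [innerSum_pair e hq, hcard, hcardc, heq] at hdual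

/-- The span of the decomposable functions attached to the pairs in `𝒥`. -/
def decomposableSpan (k : Type) [Field k] (𝒥 : Finset (Finset (Fin l))) : Submodule k (RF k l) :=
  Submodule.span k (Set.range fun J : 𝒥 => diffProd k (blockExp (J : Finset (Fin l))))

lemma component_zero_sum_smul (hl : l = 4 ∨ l = 5) (h𝒥 : IsPairSystem 𝒥) (hJ : J ∈ 𝒥)
    (c : 𝒥 → k) :
    component J (fun _ => 2) 0 (∑ K : 𝒥, c K • diffProd k (blockExp (K : Finset (Fin l)))) =
      c ⟨J, hJ⟩ • diffProd k (blockExp J) := by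
  rw [← componentMap_apply, map_sum, Finset.sum_eq_single_of_mem ⟨J, hJ⟩ (Finset.mem_univ _)]
  · rw [map_smul, componentMap_apply, component_zero_diffProd_blockExp hl h𝒥 hJ hJ, if_pos rfl]
  · intro K _ hK
    rw [map_smul, componentMap_apply, component_zero_diffProd_blockExp hl h𝒥 K.2 hJ,
      if_neg fun h => hK (Subtype.ext h.symm), smul_zero]

lemma eq_zero_of_component_zero_sum_smul (hl : l = 4 ∨ l = 5) (h𝒥 : IsPairSystem 𝒥) (c : 𝒥 → k)
    (h : ∀ J ∈ 𝒥, component J (fun _ => 2) 0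
      (∑ K : 𝒥, c K • diffProd k (blockExp (K : Finset (Fin l)))) = 0) (J : 𝒥) : c J = 0 := by
  have hJ := h J J.2
  rw [component_zero_sum_smul hl h𝒥 J.2] at hJ
  exact (smul_eq_zero.1 hJ).resolve_right (diffProd_ne_zero _)

lemma finrank_decomposableSpan (hl : l = 4 ∨ l = 5) (h𝒥 : IsPairSystem 𝒥) :
    Module.finrank k (decomposableSpan k 𝒥) = 𝒥.card := by
  rw [decomposableSpan, finrank_span_eq_card, Fintype.card_coe]
  refine Fintype.linearIndependent_iff.2 fun c hc => ?_
  refine eq_zero_of_component_zero_sum_smul hl h𝒥 c fun J _ => ?_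
  rw [hc, ← componentMap_apply, map_zero]

lemma component_zero_of_mem_invariantTwists [CharZero k] (hl : l = 4 ∨ l = 5) (hJ : J.card = 2)
    (hα : α ∈ invariantTwists k (fun _ : Fin l × Fin l => -2)) :
    component J (fun _ => 2) 0 α = 0 := by
  have huniv : J ≠ Finset.univ := fun h => by
    rw [h, Finset.card_fin] at hJ
    lia
  have hempty : J ≠ ∅ := fun h => by simp [h] at hJ
  exact le_ordAlong_iff_component.1 (two_sub_le_ordAlong (by lia) hα hempty huniv) 0 two_pos

lemma disjoint_invariantTwists_decomposableSpan [CharZero k] (hl : l = 4 ∨ l = 5)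
    (h𝒥 : IsPairSystem 𝒥) :
    Disjoint (invariantTwists k (fun _ : Fin l × Fin l => -2)) (decomposableSpan k 𝒥) := by
  refine Submodule.disjoint_def.2 fun α hα hspan => ?_
  obtain ⟨c, rfl⟩ := Submodule.mem_span_range_iff_exists_fun k |>.1 hspan
  have hc := eq_zero_of_component_zero_sum_smul hl h𝒥 c fun J hJ =>
    component_zero_of_mem_invariantTwists hl (h𝒥.card_eq_two J hJ) hα
  simp [hc]

lemma invariantTwists_sup_decomposableSpan [CharZero k] (hD : IsPartialDeriv D)
    (hl : l = 4 ∨ l = 5) (h𝒥 : IsPairSystem 𝒥) :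
    invariantTwists k (fun _ : Fin l × Fin l => -2) ⊔ decomposableSpan k 𝒥 =
      admissibleSpace k l := by
  have hle : invariantTwists k (fun _ : Fin l × Fin l => -2) ≤ admissibleSpace k l := fun α hα =>
    (mem_admissibleSpace hD).2 ((admissibleInd_iff hD (by lia) (by lia)).2 hα).1
  have hspan : decomposableSpan k 𝒥 ≤ admissibleSpace k l := Submodule.span_le.2 <| by
    rintro _ ⟨J, rfl⟩
    exact (mem_admissibleSpace hD).2
      (admissible_diffProd_blockExp hD hl (h𝒥.card_eq_two J J.2))
  refine le_antisymm (sup_le hle hspan) fun α hα => ?_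
  have hrigid (J : 𝒥) : ∃ c : k, c • diffProd k (blockExp (J : Finset (Fin l))) =
      component J (fun _ => 2) 0 α := by
    have hcard := h𝒥.card_eq_two J J.2
    have hcompl := J.1.card_add_card_compl
    rw [Fintype.card_fin] at hcompl
    exact Submodule.mem_span_singleton.1 <| component_zero_mem_span hD
      ((mem_admissibleSpace hD).1 hα) (incidentSum_blockExp hl hcard)
      (isSplitBy_blockExp (by simp)) (innerSum_blockExp hl hcard (by simp)) (by lia) (by lia)
  choose c hc using hrigid
  set β := ∑ K : 𝒥, c K • diffProd k (blockExp (K : Finset (Fin l)))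
  have hβ : β ∈ decomposableSpan k 𝒥 := Submodule.mem_span_range_iff_exists_fun k |>.2 ⟨c, rfl⟩
  rw [← sub_add_cancel α β]
  refine Submodule.add_mem_sup (mem_invariantTwists_of_component_eq_zero hD h𝒥
    ((mem_admissibleSpace hD).1 (sub_mem hα (hspan hβ))) fun J hJ => ?_) hβ
  rw [← componentMap_apply, map_sub, componentMap_apply, componentMap_apply,
    component_zero_sum_smul hl h𝒥 hJ, ← hc ⟨J, hJ⟩, sub_self]

lemma finrank_admissibleSpace [CharZero k] (hD : IsPartialDeriv D) (hl : l = 4 ∨ l = 5)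
    (h𝒥 : IsPairSystem 𝒥) [Module.Finite k (invariantTwists k (fun _ : Fin l × Fin l => -2))] :
    Module.finrank k (admissibleSpace k l) =
      Module.finrank k (invariantTwists k (fun _ : Fin l × Fin l => -2)) + 𝒥.card := by
  have : Module.Finite k (decomposableSpan k 𝒥) :=
    Module.Finite.span_of_finite k (Set.finite_range _)
  rw [← finrank_decomposableSpan (k := k) hl h𝒥, ← invariantTwists_sup_decomposableSpan hD hl h𝒥,
    ← Submodule.finrank_sup_add_finrank_inf_eq,
    (disjoint_invariantTwists_decomposableSpan hl h𝒥).eq_bot, finrank_bot, add_zero]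

lemma card_orderedPairs_incident {m : ℕ} (i : Fin (m + 1)) :
    (orderedPairs (m + 1) |>.filter fun p => p.1 = i ∨ p.2 = i).card = m := by
  have hcard : ({i}ᶜ : Finset (Fin (m + 1))).card = m := by simp [Finset.card_compl]
  refine Eq.trans ?_ hcard
  refine Finset.card_nbij' (fun p => if p.1 = i then p.2 else p.1)
    (fun j => (min i j, max i j)) ?_ ?_ ?_ ?_ <;> intro p hp <;>
    simp only [Finset.coe_filter, mem_orderedPairs, Set.mem_ofPred_eq, Finset.coe_compl,
      Finset.coe_singleton, Set.mem_compl_iff, Set.mem_singleton_iff] at hp ⊢ <;>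
    grind

lemma finrank_invariantTwists_neg_two [CharZero k] (n m : ℕ) (h : n + 4 = 2 * m) :
    Module.finrank k (invariantTwists k (fun _ : Fin (m + 1) × Fin (m + 1) => -2)) =
      trivialMultiplicity n m n := by
  rw [finrank_invariantTwists]
  have hweight : twistWeight (fun _ : Fin (m + 1) × Fin (m + 1) => -2) = fun _ => (n : ℤ) := by
    ext i
    rw [twistWeight, incidentSum, Finset.sum_const, card_orderedPairs_incident, nsmul_eq_mul]
    lia
  rw [hweight, finrank_sl2Invariants_const n (Fintype.card_fin _)]

end Decomposables

/-- `dim R⁴₀ = 3`, `dim R⁴ = 6`, `dim R⁵₀ = 16`, `dim R⁵ = 26`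
(the sets of (indecomposable) admissible functions are `k`-subspaces, so taking
the span does not change them). -/
theorem statement7 {k : Type} [Field k] [CharZero k]
    (D4 : Fin 4 → Derivation k (RF k 4) (RF k 4)) (h4 : IsPartialDeriv D4)
    (D5 : Fin 5 → Derivation k (RF k 5) (RF k 5)) (h5 : IsPartialDeriv D5) :
    Module.finrank k
      ↥(Submodule.span k {α : RF k 4 | AdmissibleInd D4 Finset.univ α}) = 3 ∧
    Module.finrank k
      ↥(Submodule.span k {α : RF k 4 | Admissible D4 Finset.univ α}) = 6 ∧
    Module.finrank k
      ↥(Submodule.span k {α : RF k 5 | AdmissibleInd D5 Finset.univ α}) = 16 ∧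
    Module.finrank k
      ↥(Submodule.span k {α : RF k 5 | Admissible D5 Finset.univ α}) = 26 := by
  have hrank₄ : Module.finrank k (invariantTwists k fun _ : Fin 4 × Fin 4 => -2) = 3 :=
    (finrank_invariantTwists_neg_two 2 3 rfl).trans (by decide)
  have hrank₅ : Module.finrank k (invariantTwists k fun _ : Fin 5 × Fin 5 => -2) = 16 :=
    (finrank_invariantTwists_neg_two 4 4 rfl).trans (by decide)
  have : Module.Finite k (invariantTwists k fun _ : Fin 4 × Fin 4 => -2) :=
    Module.finite_of_finrank_pos (by lia)
  have : Module.Finite k (invariantTwists k fun _ : Fin 5 × Fin 5 => -2) :=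
    Module.finite_of_finrank_pos (by lia)
  rw [span_setOf_admissibleInd h4 (by lia) (by lia), span_setOf_admissible h4,
    span_setOf_admissibleInd h5 (by lia) (by lia), span_setOf_admissible h5,
    finrank_admissibleSpace h4 (.inl rfl) isPairSystem_four,
    finrank_admissibleSpace h5 (.inr rfl) isPairSystem_five, hrank₄, hrank₅]
  decide +kernel

end Griess
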